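/- arXiv:2311.01947 — 3 statements merged into one kernel-verified Lean document; each statement's English description precedes it below -/
import Mathlib

section
/- Let p be a prime, e ≥ 1, q = p^e, and let a, b be natural numbers with a ≥ 1 and b ≤ e−1, and let n be a non-negative integer. Then the following are equivalent: (i) there exist a length m and a p^{ae−b}-divisible linear code over F_q of effective length n; (ii) the leading coefficient c_a of the S_q(a,b)-adic expansion of n is non-negative, i.e., whenever n = Σ_{i=0}^{a} c_i·s_q(a,b,i) with c_0 ∈ {0,…,p^{e−b}−1}, c_i ∈ {0,…,q−1} for 1 ≤ i ≤ a−1, and c_a ∈ ℤ, then c_a ≥ 0. -/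
open Module Finset

noncomputable section
open scoped Classical

variable (F : Type) [Field F] [Fintype F]

instance finiteSubmodule (v : ℕ) : Finite (Submodule F (Fin v → F)) :=
  Finite.of_injective (fun s => (s : Set (Fin v → F))) SetLike.coe_injective

/-- The points of `PG(v-1,q)`: one-dimensional subspaces of `F_q^v`. -/
abbrev PGPoint (v : ℕ) := {W : Submodule F (Fin v → F) // finrank F W = 1}

instance (v : ℕ) : Fintype (PGPoint F v) := Fintype.ofFinite _

/-- Cardinality of a multiset of points. -/
def mCard {v : ℕ} (M : PGPoint F v → ℕ) : ℕ := ∑ P, M P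

/-- Multiplicity of a subspace: the sum of multiplicities over points contained in it. -/
def mVal {v : ℕ} (M : PGPoint F v → ℕ) (S : Submodule F (Fin v → F)) : ℕ :=
  ∑ P : PGPoint F v, if P.1 ≤ S then M P else 0

/-- A multiset of points is `Δ`-divisible if `#M ≡ M(H) (mod Δ)` for every hyperplane `H`. -/
def IsDivisibleMultiset {v : ℕ} (Δ : ℕ) (M : PGPoint F v → ℕ) : Prop :=
  ∀ H : Submodule F (Fin v → F), finrank F H = v - 1 → mCard F M ≡ mVal F M H [MOD Δ]

/-- A set of points is `Δ`-divisible if `|S| ≡ |S ∩ H| (mod Δ)` for every hyperplane `H`. -/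
def IsDivisibleSet {v : ℕ} (Δ : ℕ) (S : Set (PGPoint F v)) : Prop :=
  ∀ H : Submodule F (Fin v → F), finrank F H = v - 1 →
    S.ncard ≡ (S ∩ {P | P.1 ≤ H}).ncard [MOD Δ]

/-- A linear code `C ≤ F_q^m` is `Δ`-divisible if all Hamming weights are divisible by `Δ`. -/
def IsDivisibleCode {m : ℕ} (Δ : ℕ) (C : Submodule F (Fin m → F)) : Prop :=
  ∀ c ∈ C, Δ ∣ hammingNorm c

/-- The effective length: the number of coordinates where some codeword is nonzero. -/
def effLength {m : ℕ} (C : Submodule F (Fin m → F)) : ℕ :=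
  Nat.card {i : Fin m // ∃ c ∈ C, c i ≠ 0}

/-- `s_q(a,b,i)`, with `q = p^e`, written without division:
`s_q(a,b,0) = 1 + q + ⋯ + q^a` and `s_q(a,b,i) = p^{ie-b}·(1 + q + ⋯ + q^{a-i})` for `i ≥ 1`. -/
def sQ (p e a b i : ℕ) : ℕ :=
  if i = 0 then ∑ j ∈ Finset.range (a + 1), (p ^ e) ^ j
  else p ^ (i * e - b) * ∑ j ∈ Finset.range (a - i + 1), (p ^ e) ^ j


set_option linter.unusedSectionVars false

/-! ### Arithmetic -/

/-- The geometric sum `1 + q + ⋯ + q^(k-1)` in `ℤ`. -/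
def gZ (q : ℤ) (k : ℕ) : ℤ := ∑ j ∈ Finset.range k, q ^ j

lemma gZ_mul (q : ℤ) (k : ℕ) : (q - 1) * gZ q k = q ^ k - 1 := by
  unfold gZ; exact mul_geom_sum q k

lemma gZ_succ (q : ℤ) (k : ℕ) : gZ q (k + 1) = gZ q k + q ^ k := by
  unfold gZ; exact Finset.sum_range_succ _ _

lemma gZ_succ' (q : ℤ) (k : ℕ) : gZ q (k + 1) = q * gZ q k + 1 := by
  unfold gZ; exact geom_sum_succ

lemma digits_lt (q u c0 : ℤ) (d : ℕ → ℤ) (A : ℕ) (hq : 0 ≤ q) (hu : 0 ≤ u) (hc : c0 < u)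
    (hd : ∀ i < A, d i < q) :
    c0 + ∑ i ∈ Finset.range A, d i * (q ^ i * u) < q ^ A * u := by
  induction A with
  | zero => simpa using hc
  | succ A ih =>
    have h1 := ih (fun i hi => hd i (by omega))
    rw [Finset.sum_range_succ]
    have h2 : d A + 1 ≤ q := hd A (by omega)
    have h3 : 0 ≤ q ^ A * u := by positivity
    have h4 := mul_le_mul_of_nonneg_right h2 h3
    have : q ^ (A + 1) * u = q * (q ^ A * u) := by ring
    linarith

/-- The value of an expansion with digits `c0, d 0, …, d A`. -/
def valZ (q u : ℤ) (A : ℕ) (c0 : ℤ) (d : ℕ → ℤ) : ℤ :=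
  c0 * gZ q (A + 2) + ∑ i ∈ Finset.range (A + 1), d i * (q ^ i * u * gZ q (A + 1 - i))

lemma valZ_mul (q u w : ℤ) (huw : u * w = q) (A : ℕ) (c0 : ℤ) (d : ℕ → ℤ) :
    (q - 1) * valZ q u A c0 d =
      q * (q ^ A * u) * (c0 * w + ∑ i ∈ Finset.range (A + 1), d i)
        - (c0 + ∑ i ∈ Finset.range (A + 1), d i * (q ^ i * u)) := by
  unfold valZ
  have h : ∀ i ∈ Finset.range (A + 1), (q - 1) * (d i * (q ^ i * u * gZ q (A + 1 - i)))
      = q * (q ^ A * u) * d i - d i * (q ^ i * u) := by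
    intro i hi
    have hi' : i ≤ A + 1 := by simp at hi; omega
    have h2 : q ^ (A + 1) = q ^ i * q ^ (A + 1 - i) := by rw [← pow_add]; congr 1; omega
    calc _ = d i * (q ^ i * u) * ((q - 1) * gZ q (A + 1 - i)) := by ring
      _ = d i * u * (q ^ i * q ^ (A + 1 - i)) - d i * (q ^ i * u) := by rw [gZ_mul]; ring
      _ = _ := by rw [← h2]; ring
  rw [mul_add, Finset.mul_sum, Finset.sum_congr rfl h, Finset.sum_sub_distrib, ← Finset.mul_sum]
  have h3 : (q - 1) * (c0 * gZ q (A + 2)) = c0 * (q ^ (A + 2) - 1) := by rw [← gZ_mul]; ring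
  have h4 : q ^ (A + 2) = q * (q ^ A * u) * w := by rw [← huw]; ring
  rw [h3, h4]; ring

lemma valZ_step (q u w : ℤ) (huw : u * w = q) (A : ℕ) (c0 τ : ℤ) (d : ℕ → ℤ) :
    valZ q u (A + 1) c0 d - τ * (q ^ (A + 1) * u) =
      valZ q u A c0 (Function.update d A
        (d A + q * (c0 * w + ∑ i ∈ Finset.range (A + 2), d i - τ))) := by
  unfold valZ
  have h : ∀ i ∈ Finset.range (A + 2), d i * (q ^ i * u * gZ q (A + 1 + 1 - i))
      = d i * (q ^ i * u * gZ q (A + 1 - i)) + d i * (q ^ (A + 1) * u) := by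
    intro i hi
    have hi' : i ≤ A + 1 := by simp at hi; omega
    have h2 : q ^ (A + 1) = q ^ i * q ^ (A + 1 - i) := by rw [← pow_add]; congr 1; omega
    rw [show A + 1 + 1 - i = (A + 1 - i) + 1 by omega, gZ_succ, h2]; ring
  rw [show A + 1 + 1 = A + 2 from rfl] at *
  rw [Finset.sum_congr rfl h, Finset.sum_add_distrib, ← Finset.sum_mul]
  rw [Finset.sum_range_succ (fun i => d i * (q ^ i * u * gZ q (A + 1 - i))) (A + 1)]
  rw [Finset.sum_range_succ (fun i => d i * (q ^ i * u * gZ q (A + 1 - i))) A]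
  rw [Finset.sum_range_succ (fun i => Function.update d A _ i * (q ^ i * u * gZ q (A + 1 - i))) A]
  have h5 : ∀ y, ∑ i ∈ Finset.range A, Function.update d A y i * (q ^ i * u * gZ q (A + 1 - i))
      = ∑ i ∈ Finset.range A, d i * (q ^ i * u * gZ q (A + 1 - i)) := by
    intro y
    refine Finset.sum_congr rfl fun i hi => ?_
    rw [Function.update_of_ne (by simp at hi; omega)]
  rw [h5, Function.update_self, gZ_succ q (A + 2)]
  have h6 : q ^ (A + 2) = q ^ (A + 1) * u * w := by rw [pow_succ, ← huw]; ring
  have h7 : gZ q (A + 1 - (A + 1)) = 0 := by simp [gZ]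
  have h8 : gZ q (A + 1 - A) = 1 := by simp [gZ]
  rw [h6, h7, h8]; ring

/-- Existence of the expansion. -/
lemma exists_valZ (q u w : ℤ) (huw : u * w = q) (hq : 0 < q) (hu : 0 < u) (A : ℕ) (n : ℤ) :
    ∃ (c0 : ℤ) (d : ℕ → ℤ), (0 ≤ c0 ∧ c0 < u) ∧ (∀ i < A, 0 ≤ d i ∧ d i < q) ∧
      n = valZ q u A c0 d := by
  have key : ∀ k ≤ A, ∃ d : ℕ → ℤ, (∀ i < k, 0 ≤ d i ∧ d i < q) ∧
      q ^ k * u ∣ n - ((n % u) * gZ q (A + 2) +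
        ∑ i ∈ Finset.range k, d i * (q ^ i * u * gZ q (A + 1 - i))) := by
    intro k
    induction k with
    | zero =>
      intro _
      refine ⟨fun _ => 0, by simp, ?_⟩
      rw [gZ_succ', ← huw]
      refine ⟨n / u - (n % u) * w * gZ (u * w) (A + 1), ?_⟩
      have := Int.emod_add_mul_ediv n u
      simp only [Finset.range_zero, Finset.sum_empty]
      linear_combination -this
    | succ k ih =>
      intro hk
      obtain ⟨d, hd, t, ht⟩ := ih (by omega)
      refine ⟨Function.update d k (t % q), ?_, ?_⟩
      · intro i hi
        by_cases hik : i = k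
        · subst hik
          rw [Function.update_self]
          exact ⟨Int.emod_nonneg _ hq.ne', Int.emod_lt_of_pos _ hq⟩
        · rw [Function.update_of_ne hik]; exact hd i (by omega)
      · rw [Finset.sum_range_succ, Function.update_self]
        have h5 : ∑ i ∈ Finset.range k,
            Function.update d k (t % q) i * (q ^ i * u * gZ q (A + 1 - i))
            = ∑ i ∈ Finset.range k, d i * (q ^ i * u * gZ q (A + 1 - i)) := by
          refine Finset.sum_congr rfl fun i hi => ?_
          rw [Function.update_of_ne (by simp at hi; omega)]
        rw [h5, show A + 1 - k = (A - k) + 1 by omega, gZ_succ' q (A - k)]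
        refine ⟨t / q - (t % q) * gZ q (A - k), ?_⟩
        have := Int.emod_add_mul_ediv t q
        linear_combination ht - q ^ k * u * this
  obtain ⟨d, hd, t, ht⟩ := key A le_rfl
  refine ⟨n % u, Function.update d A t,
    ⟨Int.emod_nonneg _ hu.ne', Int.emod_lt_of_pos _ hu⟩, ?_, ?_⟩
  · intro i hi
    rw [Function.update_of_ne (by omega)]; exact hd i hi
  · unfold valZ
    rw [Finset.sum_range_succ, Function.update_self]
    have h5 : ∑ i ∈ Finset.range A, Function.update d A t i * (q ^ i * u * gZ q (A + 1 - i))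
        = ∑ i ∈ Finset.range A, d i * (q ^ i * u * gZ q (A + 1 - i)) := by
      refine Finset.sum_congr rfl fun i hi => ?_
      rw [Function.update_of_ne (by simp at hi; omega)]
    have h8 : gZ q (A + 1 - A) = 1 := by simp [gZ]
    rw [h5, h8]
    linear_combination ht

/-! ### Non-existence -/

/-- Number of coordinates of `S` where `x` is nonzero. -/
def wtOn {m : ℕ} (S : Finset (Fin m)) (x : Fin m → F) : ℕ := (S.filter (fun i => x i ≠ 0)).card

lemma card_line (y z : F) (hz : z ≠ 0) :
    (Finset.univ.filter (fun l : F => y + l * z ≠ 0)).card = Fintype.card F - 1 := by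
  have : Finset.univ.filter (fun l : F => y + l * z ≠ 0) = Finset.univ.erase (-y / z) := by
    ext l
    simp only [Finset.mem_filter, Finset.mem_univ, true_and, Finset.mem_erase, and_true]
    rw [not_iff_not, eq_div_iff hz]
    constructor
    · intro h; linear_combination h
    · intro h; linear_combination h
  rw [this, Finset.card_erase_of_mem (Finset.mem_univ _), Finset.card_univ]

lemma sum_line {m : ℕ} (S : Finset (Fin m)) (x c : Fin m → F) :
    ∑ l : F, wtOn F S (x + l • c) =
      (Fintype.card F - 1) * wtOn F S c
        + Fintype.card F * wtOn F (S.filter (fun i => c i = 0)) x := by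
  unfold wtOn
  simp only [Finset.card_filter, Finset.sum_filter]
  rw [Finset.sum_comm, Finset.mul_sum, Finset.mul_sum, ← Finset.sum_add_distrib]
  refine Finset.sum_congr rfl fun i _ => ?_
  by_cases h : c i = 0
  · simp [h]
  · have := card_line F (x i) (c i) h
    rw [Finset.card_filter] at this
    simpa [h] using this

lemma exists_heavy {m : ℕ} (C : Submodule F (Fin m → F)) (S : Finset (Fin m))
    (hS : ∀ i ∈ S, ∃ c ∈ C, c i ≠ 0) :
    ∃ c ∈ C, (Fintype.card F - 1) * S.card ≤ Fintype.card F * wtOn F S c := by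
  have h1 : ∀ i ∈ S, Fintype.card F * ∑ x : C, (if x.1 i ≠ 0 then 1 else 0)
      = ∑ x : C, (Fintype.card F - 1) := by
    intro i hi
    obtain ⟨c, hc, hci⟩ := hS i hi
    have h2 : ∀ l : F, ∑ x : C, (if x.1 i ≠ 0 then 1 else 0)
        = ∑ x : C, (if x.1 i + l * c i ≠ 0 then 1 else 0) := by
      intro l
      refine (Fintype.sum_equiv (Equiv.addRight (⟨l • c, C.smul_mem l hc⟩ : C)) _ _ ?_).symm
      intro x
      by_cases hxl : x.1 i + l * c i = 0 <;> simp [hxl]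
    have h3 : Fintype.card F * ∑ x : C, (if x.1 i ≠ 0 then 1 else 0)
        = ∑ l : F, ∑ x : C, (if x.1 i + l * c i ≠ 0 then 1 else 0) := by
      rw [← Finset.sum_congr rfl (fun l _ => h2 l)]
      simp
    rw [h3, Finset.sum_comm]
    refine Finset.sum_congr rfl fun x _ => ?_
    rw [← card_line F (x.1 i) (c i) hci, Finset.card_filter]
  have h4 : ∑ x : C, (Fintype.card F - 1) * S.card ≤ ∑ x : C, Fintype.card F * wtOn F S x.1 := by
    apply le_of_eq
    rw [← Finset.mul_sum Finset.univ (fun x : C => wtOn F S x.1)]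
    unfold wtOn
    simp only [Finset.card_filter]
    rw [Finset.sum_comm, Finset.mul_sum, Finset.sum_congr rfl h1]
    simp
    ring
  obtain ⟨x, _, hx⟩ := Finset.exists_le_of_sum_le (s := (Finset.univ : Finset C)) ⟨0, by simp⟩ h4
  exact ⟨x.1, x.2, hx⟩

lemma card_split {m : ℕ} (S : Finset (Fin m)) (c : Fin m → F) :
    (S.filter (fun i => c i = 0)).card + wtOn F S c = S.card := by
  unfold wtOn; exact Finset.card_filter_add_card_filter_not _

lemma lower {m : ℕ} (C : Submodule F (Fin m → F)) (u w : ℕ) (huw : u * w = Fintype.card F)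
    (A : ℕ) : ∀ (S : Finset (Fin m)), (∀ i ∈ S, ∃ c ∈ C, c i ≠ 0) →
    (∀ c ∈ C, (Fintype.card F) ^ A * u ∣ wtOn F S c) →
    ∀ (c0 : ℤ) (d : ℕ → ℤ), (0 ≤ c0 ∧ c0 < u) →
    (∀ i < A, 0 ≤ d i ∧ d i < (Fintype.card F : ℤ)) →
    (S.card : ℤ) = valZ (Fintype.card F) u A c0 d → 0 ≤ d A := by
  have hq1 : 1 ≤ Fintype.card F := Fintype.card_pos
  have huwZ : (u : ℤ) * w = (Fintype.card F : ℤ) := by exact_mod_cast huw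
  have hu : 0 < u := Nat.pos_of_ne_zero (by rintro rfl; simp at huw; omega)
  generalize hq : Fintype.card F = q at *
  have huZ : (0 : ℤ) < u := by exact_mod_cast hu
  have hqZ : (0 : ℤ) < q := by exact_mod_cast hq1
  have heavy : ∀ S : Finset (Fin m), (∀ i ∈ S, ∃ c ∈ C, c i ≠ 0) →
      ∃ c ∈ C, ((q : ℤ) - 1) * S.card ≤ q * wtOn F S c := by
    intro S hS
    obtain ⟨c, hc, h⟩ := exists_heavy F C S hS
    refine ⟨c, hc, ?_⟩
    rw [hq] at h
    zify [hq1] at h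
    exact h
  induction A with
  | zero =>
    intro S hS hdiv c0 d hc _ hval
    by_contra hneg
    obtain ⟨x, hx, hheavy⟩ := heavy S hS
    obtain ⟨k, hk⟩ := hdiv x hx
    have hle := card_split F S x
    have hle' : (wtOn F S x : ℤ) ≤ S.card := by exact_mod_cast (by omega)
    have hk' : (wtOn F S x : ℤ) = u * k := by rw [hk]; push_cast; ring
    simp only [valZ, gZ, Finset.sum_range_succ, Finset.sum_range_zero] at hval
    simp at hval
    rw [hk'] at hle' hheavy
    have h1 : (u : ℤ) * (-1) < u * (c0 * w + d 0 - k) := by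
      have : (u : ℤ) * (c0 * w + d 0 - k) = S.card - u * k - c0 := by
        rw [hval, ← huwZ]; ring
      rw [this]; linarith
    have h2 := lt_of_mul_lt_mul_left h1 huZ.le
    have h3 : 0 ≤ (u : ℤ) * (c0 * w + d 0 - k) := mul_nonneg huZ.le (by omega)
    have h4 : (u : ℤ) * (c0 * w + d 0 - k) = S.card - u * k - c0 := by
        rw [hval, ← huwZ]; ring
    have h5 : c0 ≤ S.card - u * k := by linarith
    have h6 := mul_le_mul_of_nonneg_left h5 hqZ.le
    have h7 : d 0 * u ≤ -1 * u := mul_le_mul_of_nonneg_right (by omega) huZ.le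
    nlinarith
  | succ A ih =>
    intro S hS hdiv c0 d hc hd hval
    by_contra hneg
    obtain ⟨x, hx, hheavy⟩ := heavy S hS
    obtain ⟨k, hk⟩ := hdiv x hx
    have hsplit := card_split F S x
    have hk' : (wtOn F S x : ℤ) = k * (q ^ (A + 1) * u) := by rw [hk]; push_cast; ring
    have h1 := ih (S.filter (fun i => x i = 0)) (fun i hi => hS i (Finset.mem_filter.1 hi).1)
      (by
        intro y hy
        have h2 := sum_line F S y x
        have h3 : q ^ (A + 1) * u ∣ ∑ l : F, wtOn F S (y + l • x) :=
          Finset.dvd_sum fun l _ => hdiv _ (C.add_mem hy (C.smul_mem l hx))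
        rw [h2, hq] at h3
        have h4 := (Nat.dvd_add_right ((hdiv x hx).mul_left (q - 1))).1 h3
        rw [pow_succ', mul_assoc] at h4
        exact Nat.dvd_of_mul_dvd_mul_left hq1 h4)
      c0 (Function.update d A
        (d A + q * (c0 * w + ∑ i ∈ Finset.range (A + 2), d i - k))) hc
      (by
        intro i hi
        rw [Function.update_of_ne (by omega)]
        exact hd i (by omega))
      (by
        rw [← valZ_step q u w huwZ, ← hval, ← hk', ← hsplit]; push_cast; ring)
    rw [Function.update_self] at h1
    rw [hval, valZ_mul q u w huwZ, hk'] at hheavy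
    rw [Finset.sum_range_succ (fun i => d i * _)] at hheavy
    have h2 := digits_lt q u c0 d (A + 1) hqZ.le huZ.le hc.2 (fun i hi => (hd i hi).2)
    set X := c0 * w + ∑ i ∈ Finset.range (A + 2), d i with hX
    have hD : (0 : ℤ) < q ^ (A + 1) * u := by positivity
    have h3 : d (A + 1) * ((q : ℤ) ^ (A + 1) * u) ≤ -1 * (q ^ (A + 1) * u) :=
      mul_le_mul_of_nonneg_right (by omega) hD.le
    have h4 : (q : ℤ) * (q ^ (A + 1) * u) * X < q * (q ^ (A + 1) * u) * k := by
      linarith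
    have h5 : X < k := lt_of_mul_lt_mul_left h4 (by positivity)
    have h6 : (q : ℤ) * (X - k) ≤ q * (-1) := mul_le_mul_of_nonneg_left (by omega) hqZ.le
    have h7 := (hd A (by omega)).2
    linarith

/-! ### Constructions -/

/-- Indicator of being nonzero. -/
def nzInd (x : F) : ℕ := if x ≠ 0 then 1 else 0

/-- A `Δ`-divisible code of full length `n`, given by a linear encoding map. -/
def Ach (Δ n : ℕ) : Prop :=
  ∃ (V : Type) (_ : AddCommGroup V) (_ : Module F V) (ι : Type) (_ : Fintype ι)
    (f : V →ₗ[F] (ι → F)), (∀ i, ∃ v, f v i ≠ 0) ∧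
    (∀ v, Δ ∣ ∑ i, nzInd F (f v i)) ∧ Fintype.card ι = n

lemma Ach.zero (Δ : ℕ) : Ach F Δ 0 :=
  ⟨Unit, inferInstance, inferInstance, Empty, inferInstance, 0, by simp, by simp, by simp⟩

variable {F} in
lemma Ach.add {Δ n n' : ℕ} (h : Ach F Δ n) (h' : Ach F Δ n') : Ach F Δ (n + n') := by
  obtain ⟨V, _, _, ι, _, f, hf, hd, hn⟩ := h
  obtain ⟨V', _, _, ι', _, f', hf', hd', hn'⟩ := h'
  refine ⟨V × V', inferInstance, inferInstance, ι ⊕ ι', inferInstance,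
    { toFun := fun v => Sum.elim (f v.1) (f' v.2)
      map_add' := ?_
      map_smul' := ?_ }, ?_, ?_, ?_⟩
  · intro x y; ext i; cases i <;> simp
  · intro x y; ext i; cases i <;> simp
  · rintro (i | i)
    · obtain ⟨v, hv⟩ := hf i; exact ⟨(v, 0), by simpa using hv⟩
    · obtain ⟨v, hv⟩ := hf' i; exact ⟨(0, v), by simpa using hv⟩
  · intro v
    rw [Fintype.sum_sum_type]
    exact dvd_add (hd v.1) (hd' v.2)
  · simp [hn, hn']

variable {F} in
lemma Ach.nsmul {Δ n : ℕ} (h : Ach F Δ n) (r : ℕ) : Ach F Δ (r * n) := by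
  induction r with
  | zero => simpa using Ach.zero F Δ
  | succ r ih => rw [add_mul, one_mul]; exact ih.add h

variable {F} in
lemma Ach.sum {Δ : ℕ} (s : Finset ℕ) (g : ℕ → ℕ) (h : ∀ i ∈ s, Ach F Δ (g i)) :
    Ach F Δ (∑ i ∈ s, g i) :=
  Finset.sum_induction g (Ach F Δ) (fun _ _ => Ach.add) (Ach.zero F Δ) h

variable {F} in
lemma Ach.rep {Δ n : ℕ} (h : Ach F Δ n) (r : ℕ) : Ach F (r * Δ) (r * n) := by
  obtain ⟨V, _, _, ι, _, f, hf, hd, hn⟩ := h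
  refine ⟨V, inferInstance, inferInstance, Fin r × ι, inferInstance,
    { toFun := fun v i => f v i.2
      map_add' := ?_
      map_smul' := ?_ }, ?_, ?_, ?_⟩
  · intro x y; ext i; simp
  · intro x y; ext i; simp
  · intro i; exact hf i.2
  · intro v
    rw [Fintype.sum_prod_type]
    simpa using mul_dvd_mul_left r (hd v)
  · simp [hn]

variable {F} in
lemma Ach.mono {Δ Δ' n : ℕ} (h : Ach F Δ n) (hΔ : Δ' ∣ Δ) : Ach F Δ' n := by
  obtain ⟨V, i1, i2, ι, i3, f, hf, hd, hn⟩ := h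
  exact ⟨V, i1, i2, ι, i3, f, hf, fun v => hΔ.trans (hd v), hn⟩

lemma simplex_aux (k : ℕ) :
    ∃ (V : Type) (_ : AddCommGroup V) (_ : Module F V) (ι : Type) (_ : Fintype ι)
    (f : V →ₗ[F] (ι → F)), (∀ i, ∃ v, f v i ≠ 0) ∧
    (∀ v, (Fintype.card F) ^ k ∣ Fintype.card F * ∑ i, nzInd F (f v i)) ∧
      Fintype.card ι = ∑ j ∈ Finset.range k, (Fintype.card F) ^ j := by
  induction k with
  | zero => exact ⟨Unit, inferInstance, inferInstance, Empty, inferInstance, 0,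
      by simp, by simp, by simp⟩
  | succ k ih =>
    obtain ⟨V, _, _, ι, _, f, hf, hd, hn⟩ := ih
    refine ⟨V × F, inferInstance, inferInstance, (ι × F) ⊕ Unit, inferInstance,
      { toFun := fun v => Sum.elim (fun i => f v.1 i.1 + i.2 * v.2) (fun _ => v.2)
        map_add' := ?_
        map_smul' := ?_ }, ?_, ?_, ?_⟩
    · intro x y; ext i; cases i <;> simp; ring
    · intro x y; ext i; cases i <;> simp; ring
    · rintro (i | i)
      · obtain ⟨v, hv⟩ := hf i.1; exact ⟨(v, 0), by simpa using hv⟩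
      · exact ⟨(0, 1), by simp⟩
    · rintro ⟨v, t⟩
      rw [Fintype.sum_sum_type, Fintype.sum_prod_type]
      by_cases ht : t = 0
      · subst ht
        have := mul_dvd_mul_left (Fintype.card F) (hd v)
        rw [pow_succ']
        have h4 : nzInd F (0 : F) = 0 := by simp [nzInd]
        simpa [h4, ← Finset.mul_sum] using this
      · have h1 : ∀ i, ∑ l : F, nzInd F (f v i + l * t) = Fintype.card F - 1 := by
          intro i
          rw [← card_line F (f v i) t ht, Finset.card_filter]
          rfl
        have h2 : (∑ j ∈ Finset.range k, (Fintype.card F) ^ j) * (Fintype.card F - 1) + 1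
            = Fintype.card F ^ k := by
          have h3 : 1 ≤ Fintype.card F := Fintype.card_pos
          zify [h3]
          rw [geom_sum_mul]; ring
        have h4 : nzInd F t = 1 := by simp [nzInd, ht]
        simp only [LinearMap.coe_mk, AddHom.coe_mk, Sum.elim_inl, Sum.elim_inr, h1]
        simp [hn, h4, h2, pow_succ']
    · rw [geom_sum_succ]; simp [hn]; ring

lemma Ach.simplex (k : ℕ) :
    Ach F ((Fintype.card F) ^ k) (∑ j ∈ Finset.range (k + 1), (Fintype.card F) ^ j) := by
  obtain ⟨V, i1, i2, ι, i3, f, hf, hd, hn⟩ := simplex_aux F (k + 1)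
  refine ⟨V, i1, i2, ι, i3, f, hf, fun v => ?_, hn⟩
  have := hd v
  rw [pow_succ'] at this
  exact Nat.dvd_of_mul_dvd_mul_left Fintype.card_pos this

variable {F} in
lemma Ach.code {Δ n : ℕ} (h : Ach F Δ n) :
    ∃ (m : ℕ) (C : Submodule F (Fin m → F)), IsDivisibleCode F Δ C ∧ effLength F C = n := by
  obtain ⟨V, _, _, ι, _, f, hf, hd, hn⟩ := h
  let ε := Fintype.equivFin ι
  let g : V →ₗ[F] (Fin (Fintype.card ι) → F) := (LinearMap.funLeft F F ε.symm).comp f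
  have hg : ∀ v i, g v i = f v (ε.symm i) := fun v i => rfl
  refine ⟨Fintype.card ι, LinearMap.range g, ?_, ?_⟩
  · rintro _ ⟨v, rfl⟩
    have : hammingNorm (g v) = ∑ i, nzInd F (f v i) := by
      unfold hammingNorm
      rw [Finset.card_filter]
      refine Fintype.sum_equiv ε.symm _ _ fun i => ?_
      rw [hg]; rfl
    rw [this]; exact hd v
  · unfold effLength
    have h1 : ∀ i, ∃ c ∈ LinearMap.range g, c i ≠ 0 := by
      intro i
      obtain ⟨v, hv⟩ := hf (ε.symm i)
      exact ⟨g v, ⟨v, rfl⟩, hv⟩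
    rw [Nat.card_congr (Equiv.subtypeUnivEquiv h1), Nat.card_fin, hn]

lemma upper (u w : ℕ) (huw : u * w = Fintype.card F) (A n : ℕ) (c0 : ℤ) (d : ℕ → ℤ)
    (hc : 0 ≤ c0) (hd : ∀ i ≤ A, 0 ≤ d i) (hn : (n : ℤ) = valZ (Fintype.card F) u A c0 d) :
    Ach F ((Fintype.card F) ^ A * u) n := by
  have h : n = c0.toNat * (∑ j ∈ Finset.range (A + 1 + 1), (Fintype.card F) ^ j)
      + ∑ i ∈ Finset.range (A + 1), (d i).toNat *
        ((Fintype.card F ^ i * u) * ∑ j ∈ Finset.range (A - i + 1), (Fintype.card F) ^ j) := by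
    zify
    rw [hn, valZ, Int.toNat_of_nonneg hc]
    unfold gZ
    congr 1
    refine Finset.sum_congr rfl fun i hi => ?_
    have hi' : i ≤ A := by simp at hi; omega
    rw [Int.toNat_of_nonneg (hd i hi'), show A + 1 - i = A - i + 1 by omega]
  rw [h]
  refine Ach.add (Ach.nsmul ((Ach.simplex F (A + 1)).mono ⟨w, ?_⟩) _) (Ach.sum _ _ fun i hi => ?_)
  · rw [mul_assoc, huw, pow_succ]
  · refine Ach.nsmul (((Ach.simplex F (A - i)).rep _).mono ?_) _
    have hi' : i ≤ A := by simp at hi; omega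
    refine dvd_of_eq ?_
    rw [mul_right_comm, ← pow_add, Nat.add_sub_cancel' hi']

/-! ### Translation of the expansion -/

lemma sum_sQ (p e A b : ℕ) (he : 1 ≤ e) (hb : b ≤ e - 1) (c : Fin (A + 1 + 1) → ℤ)
    (c0 : ℤ) (d : ℕ → ℤ) (h0 : c 0 = c0) (hcd : ∀ i : Fin (A + 1), c i.succ = d i) :
    ∑ i : Fin (A + 1 + 1), c i * (sQ p e (A + 1) b i : ℤ)
      = valZ ((p ^ e : ℕ) : ℤ) ((p ^ (e - b) : ℕ) : ℤ) A c0 d := by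
  rw [Fin.sum_univ_succ, valZ, ← Fin.sum_univ_eq_sum_range
    (fun i => d i * (((p ^ e : ℕ) : ℤ) ^ i * ((p ^ (e - b) : ℕ) : ℤ)
      * gZ ((p ^ e : ℕ) : ℤ) (A + 1 - i)))]
  congr 1
  · simp [sQ, gZ, h0]
  · refine Finset.sum_congr rfl fun i _ => ?_
    have h1 : ((i : ℕ) + 1) * e - b = e * i + (e - b) := by
      have : ((i : ℕ) + 1) * e = e * i + e := by ring
      omega
    have h2 : A + 1 - ((i : ℕ) + 1) + 1 = A + 1 - i := by have := i.2; omega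
    rw [hcd]
    simp only [sQ, Fin.val_succ, Nat.succ_ne_zero, if_false, h1, h2, gZ]
    push_cast
    rw [pow_add, pow_mul]

/-- Main theorem. For `q = p^e`, `a ≥ 1`, `b ≤ e-1` and `n ∈ ℕ`, a
`p^{ae-b}`-divisible linear code over `F_q` of effective length `n` exists iff the leading
coefficient of the `S_q(a,b)`-adic expansion of `n` is non-negative. -/
theorem stmt_0 (p e a b : ℕ) (hp : p.Prime) (he : 1 ≤ e) (ha : 1 ≤ a) (hb : b ≤ e - 1)
    (hF : Fintype.card F = p ^ e) (n : ℕ) :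
    (∃ (m : ℕ) (C : Submodule F (Fin m → F)),
        IsDivisibleCode F (p ^ (a * e - b)) C ∧ effLength F C = n) ↔
      (∀ c : Fin (a + 1) → ℤ,
        (0 ≤ c 0 ∧ c 0 < (p : ℤ) ^ (e - b)) →
        (∀ i : Fin (a + 1), 1 ≤ (i : ℕ) → (i : ℕ) ≤ a - 1 → 0 ≤ c i ∧ c i < (p : ℤ) ^ e) →
        (n : ℤ) = ∑ i : Fin (a + 1), c i * (sQ p e a b i : ℤ) →
        0 ≤ c (Fin.last a)) := by
  obtain ⟨A, rfl⟩ : ∃ A, a = A + 1 := ⟨a - 1, by omega⟩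
  have huw : p ^ (e - b) * p ^ b = Fintype.card F := by
    rw [hF, ← pow_add]; congr 1; omega
  have hΔ : p ^ ((A + 1) * e - b) = (Fintype.card F) ^ A * p ^ (e - b) := by
    rw [hF, ← pow_mul, ← pow_add]
    congr 1
    have : (A + 1) * e = e * A + e := by ring
    omega
  have hqc : ((Fintype.card F : ℕ) : ℤ) = (p : ℤ) ^ e := by rw [hF]; push_cast; rfl
  constructor
  · rintro ⟨m, C, hC, hn⟩ c hc0 hci hsum
    have hlow := lower F C (p ^ (e - b)) (p ^ b) huw A
      (Finset.univ.filter (fun i => ∃ c ∈ C, c i ≠ 0))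
      (fun i hi => (Finset.mem_filter.1 hi).2)
      (by
        intro x hx
        have h1 := hC x hx
        rw [hΔ] at h1
        convert h1 using 1
        unfold wtOn hammingNorm
        congr 1
        ext i
        simp only [Finset.mem_filter, Finset.mem_univ, true_and, and_iff_right_iff_imp]
        exact fun hi => ⟨x, hx, hi⟩)
      (c 0) (fun i => if h : i < A + 1 then c (Fin.succ ⟨i, h⟩) else 0)
      (by push_cast; exact hc0)
      (by
        intro i hi
        have hi' : i < A + 1 := by omega
        simp only [hi', dif_pos, hqc]
        exact hci _ (by simp) (by simp; omega))
      (by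
        rw [hF, ← sum_sQ p e A b he hb c _ _ rfl (by intro i; rw [dif_pos i.2]), ← hsum, ← hn]
        congr 1
        unfold effLength
        rw [Nat.card_eq_fintype_card, Fintype.card_subtype])
    simp only [Nat.lt_succ_self, dif_pos] at hlow
    exact hlow
  · intro h
    obtain ⟨c0, d, hc0, hd, hn⟩ := exists_valZ (Fintype.card F) ((p ^ (e - b) : ℕ) : ℤ)
      ((p ^ b : ℕ) : ℤ) (by exact_mod_cast huw) (by exact_mod_cast Fintype.card_pos)
      (by exact_mod_cast pow_pos hp.pos _) A n
    have hlast := h (Fin.cons c0 (fun i : Fin (A + 1) => d i))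
      (by simpa using hc0)
      (by
        intro i hi1 hi2
        obtain ⟨j, rfl⟩ := Fin.exists_succ_eq.2 (show i ≠ 0 by rintro rfl; simp at hi1)
        rw [Fin.cons_succ, ← hqc]
        exact hd _ (by simp at hi2; omega))
      (by
        rw [sum_sQ p e A b he hb _ c0 d (by simp) (by intro i; simp), ← hF]
        exact hn)
    rw [← Fin.succ_last, Fin.cons_succ, Fin.val_last] at hlast
    rw [hΔ]
    refine (upper F _ _ huw A n c0 d hc0.1 (fun i hi => ?_) hn).code
    rcases hi.lt_or_eq with hi | rfl
    · exact (hd i hi).1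
    · exact hlast

end
end

section
/- Let q be a prime power, Δ ≥ 1 a power of the characteristic of F_q, and let M be a Δ-divisible multiset of points in PG(1,q), i.e., on the projective line over F_q. Then there exist a function w from the points of PG(1,q) to ℕ and a non-negative integer s such that M(P) = Δ·w(P) + s for every point P of PG(1,q), and moreover Δ divides q·s. -/
open Module Finset

noncomputable section
open scoped Classical

variable (F : Type) [Field F] [Fintype F]

/-- Let `q = p^e` and `Δ = p^r ≥ 1` be a power of the characteristic `p` of
`F_q`. Every `Δ`-divisible multiset of points on the projective line `PG(1,q)` is of the form
`M(P) = Δ·w(P) + s` for all points `P`, where `w` is a multiset of points and `s ∈ ℕ`;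
moreover `Δ` divides `q·s`. -/
theorem stmt_6 (p e r : ℕ) (hp : p.Prime) (he : 1 ≤ e)
    (hF : Fintype.card F = p ^ e) (M : PGPoint F 2 → ℕ)
    (hdiv : IsDivisibleMultiset F (p ^ r) M) :
    ∃ (w : PGPoint F 2 → ℕ) (s : ℕ),
      (∀ P : PGPoint F 2, M P = p ^ r * w P + s) ∧ p ^ r ∣ p ^ e * s := by
  have hval : ∀ P : PGPoint F 2, mVal F M P.1 = M P := by
    intro P
    unfold mVal
    rw [Finset.sum_eq_single P]
    · simp
    · intro Q _ hQ
      rw [if_neg]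
      intro hle
      exact hQ (Subtype.ext (Submodule.eq_of_le_of_finrank_eq hle (Q.2.trans P.2.symm)))
    · simp
  have hmod : ∀ P : PGPoint F 2, mCard F M % p ^ r = M P % p ^ r := by
    intro P
    have h := hdiv P.1 P.2
    rw [hval] at h
    exact h
  have hcard : Fintype.card (PGPoint F 2) = p ^ e + 1 := by
    rw [← Nat.card_eq_fintype_card,
      ← Nat.card_congr (Projectivization.equivSubmodule F (Fin 2 → F)),
      Projectivization.card_of_finrank_two F (Fin 2 → F) (by simp),
      Nat.card_eq_fintype_card, hF]
  have hM : ∀ P : PGPoint F 2, M P = p ^ r * (M P / p ^ r) + mCard F M % p ^ r := by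
    intro P
    rw [hmod P]
    exact (Nat.div_add_mod _ _).symm
  refine ⟨fun P => M P / p ^ r, mCard F M % p ^ r, hM, ?_⟩
  have hsum : mCard F M = p ^ r * (∑ P : PGPoint F 2, M P / p ^ r)
      + (p ^ e + 1) * (mCard F M % p ^ r) := by
    calc mCard F M = ∑ P : PGPoint F 2, M P := rfl
      _ = ∑ P : PGPoint F 2, (p ^ r * (M P / p ^ r) + mCard F M % p ^ r) :=
        Finset.sum_congr rfl fun P _ => hM P
      _ = _ := by
        rw [Finset.sum_add_distrib, ← Finset.mul_sum, Finset.sum_const, Finset.card_univ,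
          hcard, smul_eq_mul]
  have hdm := Nat.div_add_mod (mCard F M) (p ^ r)
  have h1 : p ^ r * (mCard F M / p ^ r) = p ^ r * (∑ P : PGPoint F 2, M P / p ^ r)
      + p ^ e * (mCard F M % p ^ r) := by
    rw [add_mul, one_mul] at hsum
    omega
  exact (Nat.dvd_add_right (Dvd.intro _ rfl)).1 (h1 ▸ Dvd.intro _ rfl)

end
end

section
/- Let n ≥ 1 be an integer. There exist a dimension v and a nonempty 2-divisible set of points S in PG(v−1,8) with |S| = n if and only if n ∈ {9, 10} or n ≥ 12. -/
open Module Finset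

noncomputable section
open scoped Classical

variable (F : Type) [Field F] [Fintype F]

/-- A family of pairwise distinct projective points, given by representatives, such that every
linear functional is nonzero on an even number of them. -/
def DivFam {V : Type} [AddCommGroup V] [Module F V] {ι : Type} [Fintype ι] (x : ι → V) : Prop :=
  (∀ i, x i ≠ 0) ∧ (∀ i j, i ≠ j → ∀ c : F, x i ≠ c • x j) ∧
    ∀ f : Module.Dual F V, Even (#{i | f (x i) ≠ 0})

section counting

variable {F}
variable {V : Type} [AddCommGroup V] [Module F V] [FiniteDimensional F V]

instance dualFinite : Finite (Module.Dual F V) := Module.finite_of_finite F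

instance dualFintype : Fintype (Module.Dual F V) := Fintype.ofFinite _

theorem kill_count {m : ℕ} (x : Fin m → V) (hx : LinearIndependent F x) :
    (#{f : Module.Dual F V | ∀ i, f (x i) = 0}) * Fintype.card F ^ m
      = Fintype.card (Module.Dual F V) := by
  let T : Module.Dual F V →ₗ[F] (Fin m → F) :=
    LinearMap.pi (fun i => LinearMap.applyₗ (x i))
  have hT : ∀ f i, T f i = f (x i) := fun f i => rfl
  have hs : Function.Surjective T := by
    intro c
    obtain ⟨g, hg⟩ := LinearMap.exists_extend ((Basis.span hx).constr F c)
    refine ⟨g, ?_⟩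
    ext i
    rw [hT]
    have h1 : x i = (Submodule.span F (Set.range x)).subtype (Basis.span hx i) := by
      simp [Basis.span_apply]
    rw [h1, ← LinearMap.comp_apply, hg, Basis.constr_basis]
  have h1 := Submodule.card_eq_card_quotient_mul_card (LinearMap.ker T)
  have h2 : Nat.card (Module.Dual F V ⧸ LinearMap.ker T) = Fintype.card F ^ m := by
    rw [Nat.card_congr (T.quotKerEquivOfSurjective hs).toEquiv]
    simp
  have h3 : Nat.card (LinearMap.ker T) = #{f : Module.Dual F V | ∀ i, f (x i) = 0} := by
    rw [← Nat.subtype_card (p := fun f => f ∈ LinearMap.ker T)]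
    intro f
    simp [LinearMap.mem_ker, funext_iff, hT]
  rw [h2, h3, Nat.card_eq_fintype_card] at h1
  rw [h1]; try ring

/-- Functionals killing one vector. -/
theorem kill1 (hF : Fintype.card F = 8) {a : V} (ha : a ≠ 0) :
    (#{f : Module.Dual F V | f a = 0}) * 8 = Fintype.card (Module.Dual F V) := by
  have h := kill_count (F := F) ![a] (by simpa using ha)
  rw [hF] at h
  simpa using h

theorem kill2 (hF : Fintype.card F = 8) {a b : V} (hb : b ≠ 0) (h : ∀ c : F, a ≠ c • b) :
    (#{f : Module.Dual F V | f a = 0 ∧ f b = 0}) * 64 = Fintype.card (Module.Dual F V) := by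
  have h := kill_count (F := F) ![b, a] (by
    rw [LinearIndependent.pair_iff' hb]
    intro c hc; exact h c hc.symm)
  rw [hF] at h
  rw [← h]
  simp [Fin.forall_fin_two, and_comm]

theorem kill3 (hF : Fintype.card F = 8) {a b c : V} (hb : b ≠ 0) (h : ∀ c : F, a ≠ c • b)
    (hc : c ∉ Submodule.span F {a, b}) :
    (#{f : Module.Dual F V | f a = 0 ∧ f b = 0 ∧ f c = 0}) * 512
      = Fintype.card (Module.Dual F V) := by
  have h := kill_count (F := F) ![c, b, a] (by
    refine linearIndependent_finCons.mpr ⟨?_, ?_⟩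
    · rw [LinearIndependent.pair_iff' hb]
      intro c hc; exact h c hc.symm
    · simpa [Set.pair_comm] using hc)
  rw [hF] at h
  rw [← h]
  congr 2
  ext f
  simp [Fin.forall_fin_succ]
  tauto

theorem dual_pos : 0 < Fintype.card (Module.Dual F V) := Fintype.card_pos

variable {ι : Type} [Fintype ι] {x : ι → V}

theorem kills_parity (h : DivFam F x) (f : Module.Dual F V) :
    (#{i | f (x i) = 0}) % 2 = Fintype.card ι % 2 := by
  have h1 := h.2.2 f
  have h2 := Finset.card_filter_add_card_filter_not (s := (univ : Finset ι)) (fun i => f (x i) = 0)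
  rw [Finset.card_univ] at h2
  obtain ⟨r, hr⟩ := h1
  simp only [ne_eq] at hr
  omega

theorem small_false (hF : Fintype.card F = 8) (h : DivFam F x) (h1 : 1 ≤ Fintype.card ι)
    (h8 : Fintype.card ι ≤ 8) : False := by
  have hN := dual_pos (F := F) (V := V)
  rcases Nat.even_or_odd (Fintype.card ι) with he | ho
  · obtain ⟨i0⟩ : Nonempty ι := Fintype.card_pos_iff.mp h1
    have hsw : ∑ f : Module.Dual F V with f (x i0) = 0, #{k | f (x k) = 0 ∧ k ≠ i0}
        = ∑ k with k ≠ i0, #{f : Module.Dual F V | f (x k) = 0 ∧ f (x i0) = 0} := by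
      simp only [Finset.card_filter, Finset.sum_filter]
      rw [show (∑ k, if k ≠ i0 then ∑ f : Module.Dual F V, (if f (x k) = 0 ∧ f (x i0) = 0 then 1 else 0) else 0) = ∑ k, ∑ f : Module.Dual F V, if k ≠ i0 then (if f (x k) = 0 ∧ f (x i0) = 0 then 1 else 0) else 0 from ?_]
      · rw [Finset.sum_comm]
        refine Finset.sum_congr rfl fun f _ => ?_
        split_ifs with hf
        · refine Finset.sum_congr rfl fun k _ => ?_
          by_cases hk : k = i0 <;> simp [hk, hf]
        · symm
          apply Finset.sum_eq_zero
          intro k _; simp [hf]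
      · refine Finset.sum_congr rfl fun k _ => ?_
        split_ifs <;> simp
    have hr : 64 * ∑ k with k ≠ i0, #{f : Module.Dual F V | f (x k) = 0 ∧ f (x i0) = 0}
        = (Fintype.card ι - 1) * Fintype.card (Module.Dual F V) := by
      rw [Finset.mul_sum, Finset.sum_congr rfl
        (g := fun _ => Fintype.card (Module.Dual F V))]
      · rw [Finset.sum_const, smul_eq_mul, Finset.filter_ne', Finset.card_erase_of_mem (mem_univ _),
          Finset.card_univ]
      · intro k hk
        rw [mul_comm]
        exact kill2 hF (h.1 i0) (h.2.1 k i0 (by simpa using hk))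
    have hl : #{f : Module.Dual F V | f (x i0) = 0} ≤
        ∑ f : Module.Dual F V with f (x i0) = 0, #{k | f (x k) = 0 ∧ k ≠ i0} := by
      rw [Finset.card_eq_sum_ones]
      apply Finset.sum_le_sum
      intro f hf
      have hp := kills_parity h f
      have hm : i0 ∈ ({k | f (x k) = 0} : Finset ι) := by simpa using hf
      have e : ({k | f (x k) = 0 ∧ k ≠ i0} : Finset ι) = ({k | f (x k) = 0} : Finset ι).erase i0 := by
        ext k; simp [and_comm]
      rw [e, Finset.card_erase_of_mem hm]
      have := Finset.card_pos.mpr ⟨i0, hm⟩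
      rw [Nat.even_iff] at he
      omega
    have hk := kill1 hF (h.1 i0)
    have : (Fintype.card ι - 1) * Fintype.card (Module.Dual F V) ≤
      7 * Fintype.card (Module.Dual F V) := Nat.mul_le_mul_right _ (by omega)
    omega
  · have hsw : ∑ f : Module.Dual F V, #{k | f (x k) = 0}
        = ∑ k, #{f : Module.Dual F V | f (x k) = 0} := by
      simp only [Finset.card_filter]
      rw [Finset.sum_comm]
    have hr : 8 * ∑ k, #{f : Module.Dual F V | f (x k) = 0}
        = Fintype.card ι * Fintype.card (Module.Dual F V) := by
      rw [Finset.mul_sum, Finset.sum_congr rfl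
        (g := fun _ => Fintype.card (Module.Dual F V))]
      · simp
      · intro k hk
        rw [mul_comm]
        exact kill1 hF (h.1 k)
    have hl : Fintype.card (Module.Dual F V) ≤
        ∑ f : Module.Dual F V, #{k | f (x k) = 0} := by
      rw [← Finset.card_univ, Finset.card_eq_sum_ones]
      apply Finset.sum_le_sum
      intro f hf
      have hp := kills_parity h f
      rw [Nat.odd_iff] at ho
      omega
    rw [Nat.odd_iff] at ho
    have : Fintype.card ι * Fintype.card (Module.Dual F V) ≤
      7 * Fintype.card (Module.Dual F V) := Nat.mul_le_mul_right _ (by omega)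
    omega

theorem prop_of_kill {p r y z : V} (f : Module.Dual F V) (hf : ¬ (f p = 0 ∧ f r = 0))
    (hy : y ∈ Submodule.span F {p, r}) (hz : z ∈ Submodule.span F {p, r}) (hz0 : z ≠ 0)
    (fy : f y = 0) (fz : f z = 0) : ∃ c : F, y = c • z := by
  rw [Submodule.mem_span_pair] at hy hz
  obtain ⟨l, m, rfl⟩ := hy
  obtain ⟨a, b, rfl⟩ := hz
  simp only [map_add, map_smul, smul_eq_mul] at fy fz
  by_cases hp : f p = 0
  · have hr : f r ≠ 0 := fun h => hf ⟨hp, h⟩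
    have hb : b = 0 := by simpa [hp, hr] using fz
    have hm : m = 0 := by simpa [hp, hr] using fy
    subst hb hm
    have ha : a ≠ 0 := by rintro rfl; simp at hz0
    refine ⟨l / a, ?_⟩
    simp [smul_smul, ha]
  · have hb : b ≠ 0 := by
      rintro rfl
      have : a = 0 := by simpa [hp] using fz
      subst this; simp at hz0
    refine ⟨m / b, ?_⟩
    rw [smul_add, smul_smul, smul_smul]
    congr 2
    · have : (l * b - m * a) * f p = 0 := by linear_combination b * fy - m * fz
      have := (mul_eq_zero.mp this).resolve_right hp
      field_simp
      linear_combination this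
    · field_simp

/-- A full line inside an 11-point divisible family is impossible. -/
theorem no_line (hF : Fintype.card F = 8) (h : DivFam F x) (hn : Fintype.card ι = 11)
    {i j : ι} (hij : i ≠ j)
    (hfull : ∀ w ∈ Submodule.span F {x i, x j}, w ≠ 0 → ∃ k, ∃ c : F, w = c • x k) : False := by
  set L := Submodule.span F {x i, x j} with hL
  have hN := dual_pos (F := F) (V := V)
  have hiL : x i ∈ L := Submodule.subset_span (by simp)
  have hjL : x j ∈ L := Submodule.subset_span (by simp)
  -- functionals not killing the line kill exactly one point
  have hone : ∀ f : Module.Dual F V, ¬ (f (x i) = 0 ∧ f (x j) = 0) →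
      #{k | x k ∈ L ∧ f (x k) = 0} = 1 := by
    intro f hf
    have hw : f (x j) • x i - f (x i) • x j ∈ L :=
      L.sub_mem (L.smul_mem _ hiL) (L.smul_mem _ hjL)
    have hw0 : f (x j) • x i - f (x i) • x j ≠ 0 := by
      intro h0
      by_cases hj : f (x j) = 0
      · rw [hj] at h0
        simp at h0
        rcases h0 with h0 | h0
        · exact hf ⟨h0, hj⟩
        · exact h.1 j h0
      · apply h.2.1 i j hij (f (x i) / f (x j))
        rw [sub_eq_zero] at h0
        rw [div_eq_inv_mul, mul_smul, ← h0, smul_smul, inv_mul_cancel₀ hj, one_smul]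
    obtain ⟨k, c, hk⟩ := hfull _ hw hw0
    have hc : c ≠ 0 := by rintro rfl; simp at hk; exact hw0 hk
    have hfw : f (f (x j) • x i - f (x i) • x j) = 0 := by
      simp [mul_comm]
    have hkL : x k ∈ L := by
      rw [hk] at hw
      exact (L.smul_mem_iff hc).mp hw
    have hfk : f (x k) = 0 := by
      rw [hk] at hfw
      simpa [hc] using hfw
    rw [Finset.card_eq_one]
    refine ⟨k, ?_⟩
    ext l
    simp only [mem_filter, mem_univ, true_and, mem_singleton]
    constructor
    · rintro ⟨hl, fl⟩
      by_contra hne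
      obtain ⟨d, hd⟩ := prop_of_kill f hf hl hkL (h.1 k) fl hfk
      exact h.2.1 l k hne d hd
    · rintro rfl
      exact ⟨hkL, hfk⟩
  have hall : ∀ f : Module.Dual F V, (f (x i) = 0 ∧ f (x j) = 0) → ∀ w ∈ L, f w = 0 := by
    intro f hf w hw
    rw [hL, Submodule.mem_span_pair] at hw
    obtain ⟨a, b, rfl⟩ := hw
    simp [hf.1, hf.2]
  -- count
  have hA : #{k | x k ∈ L} = 9 := by
    have h1 : ∑ f : Module.Dual F V, #{k | x k ∈ L ∧ f (x k) = 0}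
        = ∑ k with x k ∈ L, #{f : Module.Dual F V | f (x k) = 0} := by
      simp only [Finset.card_filter, Finset.sum_filter]
      rw [Finset.sum_comm]
      refine Finset.sum_congr rfl fun k _ => ?_
      by_cases hk : x k ∈ L <;> simp [hk]
    have h2 : 8 * ∑ k with x k ∈ L, #{f : Module.Dual F V | f (x k) = 0}
        = #{k | x k ∈ L} * Fintype.card (Module.Dual F V) := by
      rw [Finset.mul_sum, Finset.sum_congr rfl
        (g := fun _ => Fintype.card (Module.Dual F V))]
      · simp
      · intro k hk
        rw [mul_comm]
        exact kill1 hF (h.1 k)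
    have h3 : ∑ f : Module.Dual F V, #{k | x k ∈ L ∧ f (x k) = 0}
        = #{f : Module.Dual F V | f (x i) = 0 ∧ f (x j) = 0} * #{k | x k ∈ L}
          + #{f : Module.Dual F V | ¬ (f (x i) = 0 ∧ f (x j) = 0)} := by
      rw [← Finset.sum_filter_add_sum_filter_not univ
        (fun f : Module.Dual F V => f (x i) = 0 ∧ f (x j) = 0)]
      congr 1
      · rw [Finset.sum_congr rfl (g := fun _ => #{k | x k ∈ L})]
        · simp
        · intro f hf
          congr 1
          ext k
          simp only [mem_filter, mem_univ, true_and] at hf ⊢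
          exact ⟨fun h => h.1, fun hk => ⟨hk, hall f hf _ hk⟩⟩
      · rw [Finset.card_eq_sum_ones]
        refine Finset.sum_congr rfl fun f hf => ?_
        exact hone f (by simpa only [mem_filter, mem_univ, true_and] using hf)
    have h4 := kill2 hF (h.1 j) (h.2.1 i j hij)
    have h5 := Finset.card_filter_add_card_filter_not (s := (univ : Finset (Module.Dual F V)))
      (fun f => f (x i) = 0 ∧ f (x j) = 0)
    rw [Finset.card_univ] at h5
    set c := #{f : Module.Dual F V | f (x i) = 0 ∧ f (x j) = 0}
    set d := #{f : Module.Dual F V | ¬ (f (x i) = 0 ∧ f (x j) = 0)}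
    set l := #{k | x k ∈ L}
    rw [← h1, h3, ← h4] at h2
    have hd : d = 63 * c := by omega
    rw [hd] at h2
    have hc : 0 < c := by omega
    nlinarith
  -- the rest
  let y : {k // x k ∉ L} → V := fun k => x k.1
  have hy : DivFam F y := by
    refine ⟨fun k => h.1 k.1, fun k l hkl => h.2.1 k.1 l.1 (fun e => hkl (Subtype.ext e)), ?_⟩
    intro f
    have e1 : #{k : {k // x k ∉ L} | f (y k) ≠ 0} = #{k | x k ∉ L ∧ f (x k) ≠ 0} := by
      rw [← Finset.card_map (Function.Embedding.subtype _)]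
      congr 1
      ext k
      simp [y, and_comm]
    have e2 := Finset.card_filter_add_card_filter_not (s := ({k | f (x k) ≠ 0} : Finset ι))
      (fun k => x k ∈ L)
    have e3 := Finset.card_filter_add_card_filter_not (s := ({k | x k ∈ L} : Finset ι))
      (fun k => f (x k) = 0)
    rw [Finset.filter_filter, Finset.filter_filter] at e2 e3
    have e4 : ({k | f (x k) ≠ 0 ∧ x k ∈ L} : Finset ι) = ({k | x k ∈ L ∧ ¬ f (x k) = 0} : Finset ι) := by
      ext k; simp only [mem_filter, mem_univ, true_and]; tauto
    have e5 : ({k | f (x k) ≠ 0 ∧ x k ∉ L} : Finset ι) = ({k | x k ∉ L ∧ f (x k) ≠ 0} : Finset ι) := by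
      ext k; simp only [mem_filter, mem_univ, true_and]; tauto
    rw [e4, e5] at e2
    have e6 : #{k | x k ∈ L ∧ f (x k) = 0} = 1 ∨ #{k | x k ∈ L ∧ f (x k) = 0} = 9 := by
      by_cases hf : f (x i) = 0 ∧ f (x j) = 0
      · right
        rw [← hA]
        congr 1
        ext k
        simp only [mem_filter, mem_univ, true_and]
        exact ⟨fun h => h.1, fun hk => ⟨hk, hall f hf _ hk⟩⟩
      · left; exact hone f hf
    have e7 := h.2.2 f
    rw [e1]
    rw [Nat.even_iff] at e7 ⊢
    omega
  have hc : Fintype.card {k // x k ∉ L} = 2 := by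
    rw [Fintype.card_subtype]
    have := Finset.card_filter_add_card_filter_not (s := (univ : Finset ι)) (fun k => x k ∈ L)
    rw [Finset.card_univ] at this
    omega
  exact small_false hF hy (by omega) (by omega)

theorem line_le (hF : Fintype.card F = 8) (h : DivFam F x) (hn : Fintype.card ι = 11)
    {i j : ι} (hij : i ≠ j) : #{k | x k ∈ Submodule.span F {x i, x j}} ≤ 3 := by
  by_contra hcon
  apply no_line hF h hn hij
  intro Q hQ hQ0
  by_contra hno
  push Not at hno
  set L := Submodule.span F {x i, x j} with hL
  have hN := dual_pos (F := F) (V := V)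
  have hiL : x i ∈ L := Submodule.subset_span (by simp)
  have hjL : x j ∈ L := Submodule.subset_span (by simp)
  have hsub : Submodule.span F {Q, x i} ≤ L := by
    rw [Submodule.span_le]
    rintro w (rfl | rfl)
    · exact hQ
    · exact hiL
  -- functionals killing `Q` but not `x i` kill a point off the line
  have hex : ∀ f : Module.Dual F V, f Q = 0 → f (x i) ≠ 0 →
      1 ≤ #{k | x k ∉ L ∧ f (x k) = 0} := by
    intro f fQ fi
    have hp := kills_parity h f
    have : 0 < #{k | f (x k) = 0} := by omega
    obtain ⟨k, hk⟩ := Finset.card_pos.mp this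
    rw [mem_filter] at hk
    refine Finset.card_pos.mpr ⟨k, ?_⟩
    simp only [mem_filter, mem_univ, true_and]
    refine ⟨fun hkL => ?_, hk.2⟩
    obtain ⟨c, hc⟩ := prop_of_kill f (fun h => fi h.1) hQ hkL (h.1 k) fQ hk.2
    exact hno k c hc
  have hA := Finset.card_filter_add_card_filter_not (s := ({f | f Q = 0} : Finset (Module.Dual F V)))
      (fun f => f (x i) = 0)
  rw [Finset.filter_filter, Finset.filter_filter] at hA
  have h1 := kill1 hF hQ0
  have h2 := kill2 hF (h.1 i) (hno i)
  have hsum : #{f : Module.Dual F V | f Q = 0 ∧ ¬ f (x i) = 0} ≤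
      ∑ k with x k ∉ L, #{f : Module.Dual F V | (f Q = 0 ∧ ¬ f (x i) = 0) ∧ f (x k) = 0} := by
    have e : ∑ k with x k ∉ L, #{f : Module.Dual F V | (f Q = 0 ∧ ¬ f (x i) = 0) ∧ f (x k) = 0}
        = ∑ f : Module.Dual F V with f Q = 0 ∧ ¬ f (x i) = 0, #{k | x k ∉ L ∧ f (x k) = 0} := by
      simp only [Finset.card_filter, Finset.sum_filter]
      trans ∑ k, ∑ f : Module.Dual F V,
          if x k ∉ L ∧ (f Q = 0 ∧ ¬ f (x i) = 0) ∧ f (x k) = 0 then 1 else 0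
      · refine Finset.sum_congr rfl fun k _ => ?_
        by_cases hk : x k ∈ L <;> simp [hk]
      · rw [Finset.sum_comm]
        refine Finset.sum_congr rfl fun f _ => ?_
        by_cases hf : f Q = 0 ∧ ¬ f (x i) = 0
        · simp [hf]
        · simp only [hf, false_and, and_false, if_false, Finset.sum_const_zero]
    rw [e, Finset.card_eq_sum_ones]
    apply Finset.sum_le_sum
    intro f hf
    simp only [mem_filter, mem_univ, true_and] at hf
    exact hex f hf.1 hf.2
  have hk : ∀ k, x k ∉ L →
      #{f : Module.Dual F V | (f Q = 0 ∧ ¬ f (x i) = 0) ∧ f (x k) = 0} * 512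
        = 7 * Fintype.card (Module.Dual F V) := by
    intro k hk
    have k2 := kill2 hF (a := Q) (h.1 k) (hno k)
    have k3 := kill3 hF (h.1 i) (hno i) (fun hh => hk (hsub hh))
    have hB := Finset.card_filter_add_card_filter_not
      (s := ({f : Module.Dual F V | f Q = 0 ∧ f (x k) = 0} : Finset (Module.Dual F V))) (fun f => f (x i) = 0)
    rw [Finset.filter_filter, Finset.filter_filter] at hB
    have e1 : univ.filter (fun f : Module.Dual F V => (f Q = 0 ∧ f (x k) = 0) ∧ f (x i) = 0)
        = univ.filter (fun f : Module.Dual F V => f Q = 0 ∧ f (x i) = 0 ∧ f (x k) = 0) := by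
      ext f; simp only [mem_filter, mem_univ, true_and]; tauto
    have e2 : univ.filter (fun f : Module.Dual F V => (f Q = 0 ∧ f (x k) = 0) ∧ ¬ f (x i) = 0)
        = univ.filter (fun f : Module.Dual F V => (f Q = 0 ∧ ¬ f (x i) = 0) ∧ f (x k) = 0) := by
      ext f; simp only [mem_filter, mem_univ, true_and]; tauto
    rw [e1, e2] at hB
    linarith
  have hs2 : (∑ k with x k ∉ L,
      #{f : Module.Dual F V | (f Q = 0 ∧ ¬ f (x i) = 0) ∧ f (x k) = 0}) * 512
      = #{k | x k ∉ L} * (7 * Fintype.card (Module.Dual F V)) := by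
    rw [Finset.sum_mul, Finset.sum_congr rfl
        (g := fun _ => 7 * Fintype.card (Module.Dual F V))]
    · simp
    · intro k hk'
      exact hk k (by simpa using hk')
  have hc := Finset.card_filter_add_card_filter_not (s := (univ : Finset ι)) (fun k => x k ∈ L)
  rw [Finset.card_univ] at hc
  have : #{k | x k ∉ L} * (7 * Fintype.card (Module.Dual F V))
    ≤ 7 * (7 * Fintype.card (Module.Dual F V)) := Nat.mul_le_mul_right _ (by omega)
  omega

theorem eleven_false (hF : Fintype.card F = 8) (h : DivFam F x) (hn : Fintype.card ι = 11) :
    False := by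
  have hN := dual_pos (F := F) (V := V)
  set N := Fintype.card (Module.Dual F V) with hNdef
  let I : Module.Dual F V → ι → ℤ := fun f k => if f (x k) = 0 then 1 else 0
  have hI : ∀ f, ∑ k, I f k = (#{k | f (x k) = 0} : ℤ) := by
    intro f; simp [I]
  have c1 : ∀ k, 8 * ∑ f, I f k = N := by
    intro k
    have := kill1 hF (h.1 k)
    simp only [I, Finset.sum_boole]
    rw [hNdef]
    exact_mod_cast (mul_comm _ _).trans this
  have c2 : ∀ k l, k ≠ l → 64 * ∑ f, I f k * I f l = N := by
    intro k l hkl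
    have := kill2 hF (h.1 l) (h.2.1 k l hkl)
    have e : ∀ f : Module.Dual F V, I f k * I f l = if f (x k) = 0 ∧ f (x l) = 0 then 1 else 0 := by
      intro f; simp only [I]; split_ifs <;> simp_all
    simp only [e, Finset.sum_boole]
    rw [hNdef]
    exact_mod_cast (mul_comm _ _).trans this
  have Isq : ∀ f k, I f k * I f k = I f k := by
    intro f k; simp only [I]; split_ifs <;> simp
  have c3 : ∀ k l m, k ≠ l → x m ∉ Submodule.span F {x k, x l} →
      512 * ∑ f, I f k * I f l * I f m = N := by
    intro k l m hkl hm
    have := kill3 hF (h.1 l) (h.2.1 k l hkl) hm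
    have e : ∀ f : Module.Dual F V, I f k * I f l * I f m =
        if f (x k) = 0 ∧ f (x l) = 0 ∧ f (x m) = 0 then 1 else 0 := by
      intro f; simp only [I]; split_ifs <;> simp_all
    simp only [e, Finset.sum_boole]
    rw [hNdef]
    exact_mod_cast (mul_comm _ _).trans this
  have c3' : ∀ k l m, k ≠ l → x m ∈ Submodule.span F {x k, x l} →
      512 * ∑ f, I f k * I f l * I f m = 8 * N := by
    intro k l m hkl hm
    rw [← c2 k l hkl]
    have e : ∀ f, I f k * I f l * I f m = I f k * I f l := by
      intro f
      rw [Submodule.mem_span_pair] at hm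
      obtain ⟨a, b, hab⟩ := hm
      by_cases h1 : f (x k) = 0
      · by_cases h2 : f (x l) = 0
        · have h3 : f (x m) = 0 := by rw [← hab]; simp [h1, h2]
          simp [I, h1, h2, h3]
        · simp [I, h2]
      · simp [I, h1]
    simp only [e]
    ring
  -- sum over `l` of pair counts
  have s2 : ∀ k, 64 * ∑ l, ∑ f, I f k * I f l = 18 * N := by
    intro k
    rw [← Finset.add_sum_erase univ _ (mem_univ k), mul_add,
      Finset.mul_sum (s := univ.erase k),
      Finset.sum_congr (s₁ := univ.erase k) rfl (g := fun _ => (N : ℤ))]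
    · rw [Finset.sum_const, Finset.card_erase_of_mem (mem_univ _), Finset.card_univ, hn]
      simp only [Isq]
      have := c1 k
      simp only [nsmul_eq_mul]
      push_cast
      linarith
    · intro l hl
      exact c2 k l (Finset.ne_of_mem_erase hl).symm
  have s3 : ∀ k l, k ≠ l → 512 * ∑ m, ∑ f, I f k * I f l * I f m ≤ 32 * N := by
    intro k l hkl
    have hle := line_le hF h hn hkl
    have hc := Finset.card_filter_add_card_filter_not (s := (univ : Finset ι))
      (fun m => x m ∈ Submodule.span F {x k, x l})
    rw [Finset.card_univ, hn] at hc
    rw [← Finset.sum_filter_add_sum_filter_not univ (fun m => x m ∈ Submodule.span F {x k, x l}),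
      mul_add, Finset.mul_sum, Finset.mul_sum,
      Finset.sum_congr rfl (g := fun _ => 8 * (N : ℤ)),
      Finset.sum_congr (s₁ := {m | ¬ x m ∈ Submodule.span F {x k, x l}}) rfl (g := fun _ => (N : ℤ))]
    · simp only [Finset.sum_const, nsmul_eq_mul]
      set a := #{m | x m ∈ Submodule.span F {x k, x l}}
      set b := #{m | ¬ x m ∈ Submodule.span F {x k, x l}}
      have hb : (b : ℤ) = 11 - a := by omega
      rw [hb]
      have : (a : ℤ) ≤ 3 := by exact_mod_cast hle
      have hN' : (0 : ℤ) ≤ N := by positivity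
      nlinarith
    · intro m hm
      exact c3 k l m hkl (by simpa using hm)
    · intro m hm
      exact c3' k l m hkl (by simpa using hm)
  have s3' : ∀ k, 512 * ∑ l, ∑ m, ∑ f, I f k * I f l * I f m ≤ 464 * N := by
    intro k
    rw [← Finset.add_sum_erase univ _ (mem_univ k), mul_add, Finset.mul_sum (s := univ.erase k)]
    have h1 : ∑ l ∈ univ.erase k, 512 * ∑ m, ∑ f, I f k * I f l * I f m
        ≤ ∑ l ∈ univ.erase k, 32 * (N : ℤ) :=
      Finset.sum_le_sum fun l hl => s3 k l (Finset.ne_of_mem_erase hl).symm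
    rw [Finset.sum_const, Finset.card_erase_of_mem (mem_univ _), Finset.card_univ, hn] at h1
    simp only [Isq]
    have := s2 k
    simp only [nsmul_eq_mul] at h1
    push_cast at h1
    linarith
  have S1 : 8 * ∑ f, (∑ k, I f k) = 11 * N := by
    rw [Finset.sum_comm, Finset.mul_sum, Finset.sum_congr rfl (fun k _ => c1 k)]
    simp [hn]
  have S2 : 64 * ∑ f, (∑ k, I f k) ^ 2 = 198 * N := by
    have e : ∑ f, (∑ k, I f k) ^ 2 = ∑ k, ∑ l, ∑ f, I f k * I f l := by
      simp only [sq, Finset.sum_mul_sum]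
      rw [Finset.sum_comm]
      exact Finset.sum_congr rfl fun k _ => Finset.sum_comm
    rw [e, Finset.mul_sum, Finset.sum_congr rfl (fun k _ => s2 k)]
    simp [hn]; ring
  have S3 : 512 * ∑ f, (∑ k, I f k) ^ 3 ≤ 5104 * N := by
    have e : ∑ f, (∑ k, I f k) ^ 3 = ∑ k, ∑ l, ∑ m, ∑ f, I f k * I f l * I f m := by
      simp only [pow_succ, pow_zero, one_mul, Finset.sum_mul_sum]
      simp only [Finset.sum_mul, Finset.mul_sum]
      rw [Finset.sum_comm]
      refine Finset.sum_congr rfl fun k _ => ?_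
      rw [Finset.sum_comm]
      refine Finset.sum_congr rfl fun l _ => ?_
      rw [Finset.sum_comm]
      refine Finset.sum_congr rfl fun m _ => Finset.sum_congr rfl fun f _ => ?_
      ring
    rw [e, Finset.mul_sum]
    refine (Finset.sum_le_sum (fun k _ => s3' k)).trans ?_
    simp [hn]; linarith
  have S0 : ∑ f : Module.Dual F V, (15 : ℤ) = 15 * N := by
    simp [hNdef, mul_comm]
  have hpos : 0 ≤ ∑ f, ((∑ k, I f k) ^ 3 - 9 * (∑ k, I f k) ^ 2 + 23 * (∑ k, I f k) - 15) := by
    apply Finset.sum_nonneg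
    intro f _
    rw [hI]
    have hp := kills_parity h f
    rw [hn] at hp
    obtain ⟨j, hj⟩ : ∃ j : ℕ, #{k | f (x k) = 0} = 2 * j + 1 := ⟨#{k | f (x k) = 0} / 2, by omega⟩
    rw [hj]
    push_cast
    have e : (2 * (j : ℤ) + 1) ^ 3 - 9 * (2 * j + 1) ^ 2 + 23 * (2 * j + 1) - 15
        = 8 * (j * ((j - 1) * (j - 2))) := by ring
    rw [e]
    rcases j with _ | _ | j
    · simp
    · simp
    · push_cast
      have : (j : ℤ) + 1 + 1 - 2 = j := by ring
      rw [this]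
      have : (j : ℤ) + 1 + 1 - 1 = j + 1 := by ring
      rw [this]
      positivity
  rw [Finset.sum_sub_distrib, Finset.sum_add_distrib, Finset.sum_sub_distrib,
    ← Finset.mul_sum, ← Finset.mul_sum, S0] at hpos
  have : (0 : ℤ) < N := by exact_mod_cast hN
  linarith

end counting

section bridge

variable {F}

/-- From a divisible set of points to a family of representatives. -/
theorem fam_of_set {v : ℕ} (S : Set (PGPoint F v)) (hS : IsDivisibleSet F 2 S) :
    ∃ x : S → (Fin v → F), DivFam F x := by
  have hg : ∀ P : S, ∃ w : Fin v → F, w ≠ 0 ∧ P.1.1 = Submodule.span F {w} := by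
    intro P
    obtain ⟨w, hw0, hw⟩ := finrank_eq_one_iff'.mp P.1.2
    refine ⟨w, by simpa using hw0, le_antisymm ?_ ?_⟩
    · intro u hu
      obtain ⟨c, hc⟩ := hw ⟨u, hu⟩
      rw [Submodule.mem_span_singleton]
      exact ⟨c, congrArg Subtype.val hc⟩
    · rw [Submodule.span_singleton_le_iff_mem]
      exact w.2
  choose x hx0 hx using hg
  refine ⟨x, hx0, ?_, ?_⟩
  · intro P Q hPQ c hc
    apply hPQ
    have hc0 : c ≠ 0 := by
      rintro rfl
      exact hx0 P (by simpa using hc)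
    apply Subtype.ext
    apply Subtype.ext
    rw [hx P, hx Q, hc]
    exact Submodule.span_singleton_smul_eq (IsUnit.mk0 c hc0) _
  · intro f
    by_cases hf : f = 0
    · simp [hf]
    have hk : finrank F (LinearMap.ker f) = v - 1 := by
      have := Module.Dual.finrank_ker_add_one_of_ne_zero hf
      simp at this
      omega
    have h := hS _ hk
    have e1 : S.ncard = Fintype.card S := by
      rw [← Nat.card_coe_set_eq, Nat.card_eq_fintype_card]
    have e2 : (S ∩ {P | P.1 ≤ LinearMap.ker f}).ncard = #{P : S | f (x P) = 0} := by
      rw [← Finset.card_map (Function.Embedding.subtype _), ← Set.ncard_coe_finset]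
      congr 1
      ext P
      simp only [Set.mem_inter_iff, Set.mem_ofPred_eq, Finset.coe_map, Set.mem_image,
        Finset.mem_coe, mem_filter, mem_univ, true_and, Function.Embedding.subtype_apply]
      constructor
      · rintro ⟨hP, hle⟩
        refine ⟨⟨P, hP⟩, ?_, rfl⟩
        have := hx ⟨P, hP⟩
        simp only at this
        rw [this, Submodule.span_singleton_le_iff_mem] at hle
        exact hle
      · rintro ⟨Q, hQ, rfl⟩
        refine ⟨Q.2, ?_⟩
        rw [hx Q, Submodule.span_singleton_le_iff_mem]
        exact hQ
    rw [e1, e2] at h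
    have h3 := Finset.card_filter_add_card_filter_not (s := (univ : Finset S))
      (fun P => f (x P) = 0)
    rw [Finset.card_univ] at h3
    simp only [ne_eq]
    rw [Nat.even_iff]
    unfold Nat.ModEq at h
    omega

/-- From a family of representatives to a divisible set of points. -/
theorem set_of_fam {v : ℕ} {ι : Type} [Fintype ι] [Nonempty ι] (x : ι → (Fin v → F))
    (hx : DivFam F x) :
    ∃ S : Set (PGPoint F v), S.Nonempty ∧ IsDivisibleSet F 2 S ∧ S.ncard = Fintype.card ι := by
  let p : ι → PGPoint F v := fun i => ⟨Submodule.span F {x i}, finrank_span_singleton (hx.1 i)⟩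
  have hp : Function.Injective p := by
    intro i j hij
    by_contra hne
    have h1 : Submodule.span F {x i} = Submodule.span F {x j} := congrArg Subtype.val hij
    have h2 : x i ∈ Submodule.span F {x j} := by
      rw [← h1]; exact Submodule.mem_span_singleton_self _
    obtain ⟨c, hc⟩ := Submodule.mem_span_singleton.mp h2
    exact hx.2.1 i j hne c hc.symm
  have hcard : ∀ s : Finset ι, (p '' s).ncard = #s := by
    intro s
    rw [Set.ncard_image_of_injective _ hp, Set.ncard_coe_finset]
  have hu : (Set.range p).ncard = Fintype.card ι := by
    rw [← Set.image_univ, ← Finset.coe_univ, hcard, Finset.card_univ]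
  refine ⟨Set.range p, Set.range_nonempty p, ?_, hu⟩
  intro H hH
  have hv : 0 < v := by
    rcases Nat.eq_zero_or_pos v with h0 | h0
    · subst h0
      obtain ⟨i⟩ := ‹Nonempty ι›
      exact absurd (Subsingleton.elim _ _) (hx.1 i)
    · exact h0
  have hlt : H < ⊤ := by
    rw [lt_top_iff_ne_top]
    rintro rfl
    simp at hH
    omega
  obtain ⟨f, hf, hle⟩ := Submodule.exists_le_ker_of_lt_top H hlt
  have hker : H = LinearMap.ker f := by
    apply Submodule.eq_of_le_of_finrank_eq hle
    have := Module.Dual.finrank_ker_add_one_of_ne_zero hf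
    simp at this
    omega
  have e2 : (Set.range p ∩ {P | P.1 ≤ H}) = p '' (({i | f (x i) = 0} : Finset ι) : Set ι) := by
    ext P
    simp only [Set.mem_inter_iff, Set.mem_ofPred_eq, Set.mem_range, Set.mem_image, Finset.mem_coe,
      mem_filter, mem_univ, true_and]
    constructor
    · rintro ⟨⟨i, rfl⟩, hP⟩
      refine ⟨i, ?_, rfl⟩
      rw [hker] at hP
      exact (Submodule.span_singleton_le_iff_mem _ _).mp hP
    · rintro ⟨i, hi, rfl⟩
      refine ⟨⟨i, rfl⟩, ?_⟩
      rw [hker]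
      exact (Submodule.span_singleton_le_iff_mem _ _).mpr hi
  rw [e2, hcard, hu]
  exact (kills_parity hx f).symm

/-- There is a divisible family of size `n`. -/
def Good (F : Type) [Field F] [Fintype F] (n : ℕ) : Prop :=
  ∃ (v : ℕ) (ι : Type) (_ : Fintype ι) (x : ι → (Fin v → F)), DivFam F x ∧ Fintype.card ι = n

theorem Good.add {a b : ℕ} (ha : Good F a) (hb : Good F b) : Good F (a + b) := by
  obtain ⟨v, ι, _, x, hx, rfl⟩ := ha
  obtain ⟨w, κ, _, y, hy, rfl⟩ := hb
  let e : ((Fin v → F) × (Fin w → F)) ≃ₗ[F] (Fin (v + w) → F) :=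
    LinearEquiv.ofFinrankEq _ _ (by simp)
  let z : ι ⊕ κ → (Fin v → F) × (Fin w → F) := Sum.elim (fun i => (x i, 0)) (fun k => (0, y k))
  refine ⟨v + w, ι ⊕ κ, inferInstance, fun i => e (z i), ⟨?_, ?_, ?_⟩, by simp⟩
  · rintro (i | k) h
    · rw [LinearEquiv.map_eq_zero_iff] at h
      exact hx.1 i (congrArg Prod.fst h)
    · rw [LinearEquiv.map_eq_zero_iff] at h
      exact hy.1 k (congrArg Prod.snd h)
  · intro i j hij c hc
    rw [← map_smul] at hc
    have hc := e.injective hc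
    rcases i with i | i <;> rcases j with j | j
    · exact hx.2.1 i j (fun h => hij (by rw [h])) c (congrArg Prod.fst hc)
    · apply hx.1 i
      have := congrArg Prod.fst hc
      simpa [z] using this
    · apply hy.1 i
      have := congrArg Prod.snd hc
      simpa [z] using this
    · exact hy.2.1 i j (fun h => hij (by rw [h])) c (congrArg Prod.snd hc)
  · intro f
    have h1 := hx.2.2 (f ∘ₗ e.toLinearMap ∘ₗ LinearMap.inl F _ _)
    have h2 := hy.2.2 (f ∘ₗ e.toLinearMap ∘ₗ LinearMap.inr F _ _)
    have : #{i | f (e (z i)) ≠ 0} =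
        #{i | (f ∘ₗ e.toLinearMap ∘ₗ LinearMap.inl F _ _) (x i) ≠ 0} +
        #{i | (f ∘ₗ e.toLinearMap ∘ₗ LinearMap.inr F _ _) (y i) ≠ 0} := by
      simp only [Finset.card_filter, Fintype.sum_sum_type]
      rfl
    rw [this]
    exact h1.add h2

end bridge

section model

/-- Multiplication table of the field with 8 elements, elements coded by bits:
the product of `a` and `b` is the digit number `8 * a + b` in base 8. -/
def gmul (a b : ℕ) : ℕ :=
  (2821848294356612419217921029917578219971947684264937521152 / 2 ^ (24 * a + 3 * b)) % 8

/-- The value of the functional `a` on the point `p`. -/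
def gdot (a p : ℕ × ℕ × ℕ) : ℕ :=
  gmul a.1 p.1 ^^^ gmul a.2.1 p.2.1 ^^^ gmul a.2.2 p.2.2

/-- Nonproportionality, by minors. -/
def gindep (a b : ℕ × ℕ × ℕ) : Bool :=
  (gmul a.1 b.2.1 != gmul a.2.1 b.1) || (gmul a.1 b.2.2 != gmul a.2.2 b.1) ||
    (gmul a.2.1 b.2.2 != gmul a.2.2 b.2.1)

/-- All points are in range. -/
def okRange (L : List (ℕ × ℕ × ℕ)) : Bool :=
  L.all fun p => decide (p.1 < 8) && decide (p.2.1 < 8) && decide (p.2.2 < 8)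

/-- All pairs of points are independent. -/
def okPairs (L : List (ℕ × ℕ × ℕ)) : Bool :=
  (List.range L.length).all fun i => (List.range L.length).all fun j =>
    (i == j) || gindep (L.getD i (0, 0, 0)) (L.getD j (0, 0, 0))

/-- All functionals are nonzero on an even number of points. -/
def okEven (L : List (ℕ × ℕ × ℕ)) : Bool :=
  (List.range 8).all fun a => (List.range 8).all fun b => (List.range 8).all fun c =>
    (L.countP fun p => gdot (a, b, c) p != 0) % 2 == 0

variable {F}

theorem exists_gen (hF : Fintype.card F = 8) : (2 : F) = 0 ∧ ∃ α : F, α ^ 3 = α + 1 := by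
  have h2 : (2 : F) = 0 := by
    have h : ((Fintype.card F : ℕ) : F) = 0 := FiniteField.cast_card_eq_zero F
    rw [hF] at h
    have : (2 : F) ^ 3 = 0 := by push_cast at h; norm_num; exact h
    exact pow_eq_zero_iff (by norm_num) |>.mp this
  refine ⟨h2, ?_⟩
  obtain ⟨a, ha⟩ : ∃ a : F, a ∉ ({0, 1} : Finset F) := by
    by_contra hcon
    push Not at hcon
    have : (univ : Finset F) ⊆ {0, 1} := fun a _ => hcon a
    have := Finset.card_le_card this
    rw [Finset.card_univ, hF] at this
    have := Finset.card_le_two (a := (0 : F)) (b := 1)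
    omega
  simp only [mem_insert, mem_singleton, not_or] at ha
  have h7 : a ^ 7 = 1 := by
    have := FiniteField.pow_card_sub_one_eq_one a ha.1
    rwa [hF] at this
  have hne : a - 1 ≠ 0 := sub_ne_zero.mpr ha.2
  have hprod : (a - 1) * ((a ^ 3 - a - 1) * ((a + 1) ^ 3 - (a + 1) - 1)) = 0 := by
    grind
  rcases mul_eq_zero.mp hprod with h | h
  · exact absurd h hne
  rcases mul_eq_zero.mp h with h | h
  · exact ⟨a, by linear_combination h⟩
  · exact ⟨a + 1, by linear_combination h⟩

/-- Decoding of bits. -/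
def dec (α : F) (n : ℕ) : F :=
  (if n.testBit 0 then 1 else 0) + (if n.testBit 1 then α else 0) +
    (if n.testBit 2 then α ^ 2 else 0)

theorem dec_add (h2 : (2 : F) = 0) (α : F) (m n : ℕ) :
    dec α (m ^^^ n) = dec α m + dec α n := by
  simp only [dec, Nat.testBit_xor]
  cases m.testBit 0 <;> cases m.testBit 1 <;> cases m.testBit 2 <;> cases n.testBit 0 <;>
    cases n.testBit 1 <;> cases n.testBit 2 <;> simp <;> grind

theorem dec_mul (h2 : (2 : F) = 0) (α : F) (hα : α ^ 3 = α + 1) (m n : ℕ) (hm : m < 8)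
    (hn : n < 8) : dec α (gmul m n) = dec α m * dec α n := by
  interval_cases m <;> interval_cases n <;> simp [dec, gmul, Nat.testBit] <;> grind

theorem gmul_lt : ∀ m < 8, ∀ n < 8, gmul m n < 8 := by decide +kernel

theorem dec_zero (α : F) : dec α 0 = 0 := by simp [dec]

theorem dec_ne (h2 : (2 : F) = 0) (α : F) (hα : α ^ 3 = α + 1) (m : ℕ) (hm : m < 8)
    (h0 : m ≠ 0) : dec α m ≠ 0 := by
  intro h
  obtain ⟨k, hk, hk1⟩ : ∃ k < 8, gmul m k = 1 := by
    clear h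
    revert m
    decide +kernel
  have := dec_mul h2 α hα m k hm hk
  rw [hk1, h] at this
  simp [dec, Nat.testBit] at this

theorem dec_inj (h2 : (2 : F) = 0) (α : F) (hα : α ^ 3 = α + 1) (m n : ℕ) (hm : m < 8)
    (hn : n < 8) (h : dec α m = dec α n) : m = n := by
  by_contra hne
  have h1 : m ^^^ n ≠ 0 := by
    intro h; exact hne (Nat.xor_eq_zero_iff.mp h)
  have h3 : m ^^^ n < 2 ^ 3 := Nat.xor_lt_two_pow (by simpa using hm) (by simpa using hn)
  apply dec_ne h2 α hα _ h3 h1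
  rw [dec_add h2, h]
  linear_combination (dec α n) * h2

theorem dec_surj (hF : Fintype.card F = 8) (h2 : (2 : F) = 0) (α : F) (hα : α ^ 3 = α + 1)
    (y : F) : ∃ m < 8, dec α m = y := by
  have hb : Function.Bijective (fun m : Fin 8 => dec α m.1) := by
    rw [Fintype.bijective_iff_injective_and_card]
    refine ⟨?_, by simp [hF]⟩
    intro m n h
    exact Fin.ext (dec_inj h2 α hα _ _ m.2 n.2 h)
  obtain ⟨m, hm⟩ := hb.2 y
  exact ⟨m.1, m.2, hm⟩

theorem card_getElem {A : Type} (L : List A) (p : A → Bool) :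
    #{i : Fin L.length | p L[i] = true} = L.countP p := by
  induction L with
  | nil => simp
  | cons a L ih =>
    rw [List.countP_cons, ← ih]
    simp only [Finset.card_filter]
    rw [add_comm]
    exact Fin.sum_univ_succ (n := L.length)
      (fun i => if p ((a :: L)[i.1]'(by simp; omega)) = true then 1 else 0)

theorem good_of_list (hF : Fintype.card F = 8) (L : List (ℕ × ℕ × ℕ)) (h1 : 2 ≤ L.length)
    (hr : okRange L = true) (hp : okPairs L = true) (he : okEven L = true) :
    Good F L.length := by
  obtain ⟨h2, α, hα⟩ := exists_gen hF
  have hr' : ∀ p ∈ L, p.1 < 8 ∧ p.2.1 < 8 ∧ p.2.2 < 8 := by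
    simpa [okRange, and_assoc] using hr
  let x : Fin L.length → (Fin 3 → F) := fun i => ![dec α L[i].1, dec α L[i].2.1, dec α L[i].2.2]
  have hpair : ∀ i j, i ≠ j → ∀ c : F, x i ≠ c • x j := by
    intro i j hij c hc
    have hg : gindep L[i] L[j] = true := by
      simp only [okPairs, List.all_eq_true, List.mem_range] at hp
      have := hp i i.2 j j.2
      have hne : (i : ℕ) ≠ j := fun h => hij (Fin.ext h)
      simpa [hne] using this
    obtain ⟨a1, a2, a3⟩ := hr' L[i] (by simp)
    obtain ⟨b1, b2, b3⟩ := hr' L[j] (by simp)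
    have c1 : dec α L[i].1 = c * dec α L[j].1 := by simpa [x] using congrFun hc 0
    have c2 : dec α L[i].2.1 = c * dec α L[j].2.1 := by simpa [x] using congrFun hc 1
    have c3 : dec α L[i].2.2 = c * dec α L[j].2.2 := by simpa [x] using congrFun hc 2
    simp only [gindep, Bool.or_eq_true, bne_iff_ne] at hg
    rcases hg with (hg | hg) | hg
    all_goals
      apply hg
      apply dec_inj h2 α hα
      · apply gmul_lt <;> assumption
      · apply gmul_lt <;> assumption
      · rw [dec_mul h2 α hα _ _ (by assumption) (by assumption),
          dec_mul h2 α hα _ _ (by assumption) (by assumption)]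
        simp only [c1, c2, c3]
        ring
  refine ⟨3, Fin L.length, inferInstance, x, ⟨?_, hpair, ?_⟩, by simp⟩
  · intro i h0
    obtain ⟨j, hj⟩ : ∃ j : Fin L.length, i ≠ j := by
      by_cases hi : i = ⟨0, by omega⟩
      · exact ⟨⟨1, by omega⟩, by rw [hi]; simp⟩
      · exact ⟨_, hi⟩
    exact hpair i j hj 0 (by simpa using h0)
  · intro f
    obtain ⟨a, ha, hfa⟩ := dec_surj hF h2 α hα (f (Pi.single 0 1))
    obtain ⟨b, hb, hfb⟩ := dec_surj hF h2 α hα (f (Pi.single 1 1))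
    obtain ⟨c, hc, hfc⟩ := dec_surj hF h2 α hα (f (Pi.single 2 1))
    have hval : ∀ p ∈ L, f ![dec α p.1, dec α p.2.1, dec α p.2.2] = dec α (gdot (a, b, c) p) := by
      intro p hp
      obtain ⟨p1, p2, p3⟩ := hr' p hp
      have : (![dec α p.1, dec α p.2.1, dec α p.2.2] : Fin 3 → F) =
          dec α p.1 • Pi.single 0 1 + dec α p.2.1 • Pi.single 1 1 + dec α p.2.2 • Pi.single 2 1 := by
        ext i
        fin_cases i <;> simp
      rw [this, map_add, map_add, map_smul, map_smul, map_smul, ← hfa, ← hfb, ← hfc, gdot,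
        dec_add h2, dec_add h2, dec_mul h2 α hα _ _ ha p1, dec_mul h2 α hα _ _ hb p2,
        dec_mul h2 α hα _ _ hc p3]
      simp only [smul_eq_mul]
      ring
    have hlt : ∀ p ∈ L, gdot (a, b, c) p < 8 := by
      intro p hp
      obtain ⟨p1, p2, p3⟩ := hr' p hp
      have q1 : gmul a p.1 < 2 ^ 3 := gmul_lt _ ha _ p1
      have q2 : gmul b p.2.1 < 2 ^ 3 := gmul_lt _ hb _ p2
      have q3 : gmul c p.2.2 < 2 ^ 3 := gmul_lt _ hc _ p3
      exact Nat.xor_lt_two_pow (Nat.xor_lt_two_pow q1 q2) q3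
    have hiff : ∀ i, f (x i) ≠ 0 ↔ (gdot (a, b, c) L[i] != 0) = true := by
      intro i
      have hm : L[i] ∈ L := by simp
      rw [bne_iff_ne]
      apply not_congr
      rw [show f (x i) = dec α (gdot (a, b, c) L[i]) from hval _ hm]
      constructor
      · intro h
        by_contra h0
        exact dec_ne h2 α hα _ (hlt _ hm) h0 h
      · intro h
        rw [h, dec_zero]
    have hcnt : #{i | f (x i) ≠ 0} = L.countP fun p => gdot (a, b, c) p != 0 := by
      simp only [hiff]
      convert card_getElem L (fun p => gdot (a, b, c) p != 0)
    rw [hcnt, Nat.even_iff]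
    simp only [okEven, List.all_eq_true, List.mem_range] at he
    simpa using he a ha b hb c hc

end model

theorem good9 (hF : Fintype.card F = 8) : Good F 9 :=
  good_of_list hF [(0, 1, 0), (1, 0, 0), (1, 1, 0), (1, 2, 0), (1, 3, 0), (1, 4, 0), (1, 5, 0), (1, 6, 0),
    (1, 7, 0)]
    (by decide) (by decide +kernel) (by decide +kernel) (by decide +kernel)

theorem good10 (hF : Fintype.card F = 8) : Good F 10 :=
  good_of_list hF [(0, 0, 1), (0, 1, 0), (1, 0, 0), (1, 1, 1), (1, 2, 4), (1, 3, 5), (1, 4, 6), (1, 5, 7),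
    (1, 6, 2), (1, 7, 3)]
    (by decide) (by decide +kernel) (by decide +kernel) (by decide +kernel)

theorem good12 (hF : Fintype.card F = 8) : Good F 12 :=
  good_of_list hF [(0, 1, 0), (0, 1, 3), (0, 1, 4), (0, 1, 5), (1, 2, 3), (1, 2, 6), (1, 3, 1), (1, 3, 4),
    (1, 6, 2), (1, 6, 7), (1, 7, 0), (1, 7, 5)]
    (by decide) (by decide +kernel) (by decide +kernel) (by decide +kernel)

theorem good13 (hF : Fintype.card F = 8) : Good F 13 :=
  good_of_list hF [(0, 0, 1), (1, 1, 0), (1, 1, 1), (1, 1, 2), (1, 1, 3), (1, 6, 1), (1, 6, 2), (1, 6, 4),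
    (1, 6, 7), (1, 7, 1), (1, 7, 2), (1, 7, 5), (1, 7, 6)]
    (by decide) (by decide +kernel) (by decide +kernel) (by decide +kernel)

theorem good14 (hF : Fintype.card F = 8) : Good F 14 :=
  good_of_list hF [(1, 0, 0), (1, 0, 1), (1, 0, 6), (1, 0, 7), (1, 2, 0), (1, 2, 2), (1, 4, 1), (1, 4, 6),
    (1, 5, 0), (1, 5, 3), (1, 6, 3), (1, 6, 7), (1, 7, 0), (1, 7, 2)]
    (by decide) (by decide +kernel) (by decide +kernel) (by decide +kernel)

theorem good15 (hF : Fintype.card F = 8) : Good F 15 :=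
  good_of_list hF [(0, 1, 5), (1, 0, 7), (1, 1, 3), (1, 2, 2), (1, 2, 6), (1, 2, 7), (1, 3, 0), (1, 3, 3),
    (1, 3, 5), (1, 4, 5), (1, 5, 3), (1, 6, 4), (1, 7, 1), (1, 7, 5), (1, 7, 7)]
    (by decide) (by decide +kernel) (by decide +kernel) (by decide +kernel)

theorem good16 (hF : Fintype.card F = 8) : Good F 16 :=
  good_of_list hF [(0, 0, 1), (0, 1, 1), (1, 0, 0), (1, 0, 1), (1, 0, 2), (1, 0, 4), (1, 0, 5), (1, 0, 6),
    (1, 0, 7), (1, 1, 2), (1, 2, 1), (1, 3, 0), (1, 4, 7), (1, 5, 6), (1, 6, 5), (1, 7, 4)]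
    (by decide) (by decide +kernel) (by decide +kernel) (by decide +kernel)

theorem good17 (hF : Fintype.card F = 8) : Good F 17 :=
  good_of_list hF [(0, 0, 1), (1, 1, 2), (1, 1, 4), (1, 1, 5), (1, 1, 7), (1, 3, 0), (1, 3, 4), (1, 4, 4),
    (1, 4, 6), (1, 5, 3), (1, 5, 5), (1, 6, 0), (1, 6, 1), (1, 6, 5), (1, 6, 6), (1, 7, 0),
    (1, 7, 6)]
    (by decide) (by decide +kernel) (by decide +kernel) (by decide +kernel)

theorem good_all (hF : Fintype.card F = 8) (n : ℕ) (hn : n = 9 ∨ n = 10 ∨ 12 ≤ n) : Good F n := by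
  induction n using Nat.strong_induction_on with
  | _ n ih =>
    by_cases h : n < 18
    · have : n = 9 ∨ n = 10 ∨ n = 12 ∨ n = 13 ∨ n = 14 ∨ n = 15 ∨ n = 16 ∨ n = 17 := by omega
      rcases this with rfl | rfl | rfl | rfl | rfl | rfl | rfl | rfl
      · exact good9 F hF
      · exact good10 F hF
      · exact good12 F hF
      · exact good13 F hF
      · exact good14 F hF
      · exact good15 F hF
      · exact good16 F hF
      · exact good17 F hF
    · by_cases h20 : n = 20
      · subst h20
        exact (good10 F hF).add (good10 F hF)
      · have := (ih (n - 9) (by omega) (by omega)).add (good9 F hF)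
        rwa [Nat.sub_add_cancel (by omega)] at this

/-- For `n ≥ 1`, a dimension `v` and a nonempty `2`-divisible set of points
`S` in `PG(v-1,8)` with `|S| = n` exist iff `n ∈ {9,10}` or `n ≥ 12`. -/
theorem stmt_17 (hF : Fintype.card F = 8) (n : ℕ) (hn : 1 ≤ n) :
    (∃ (v : ℕ) (S : Set (PGPoint F v)),
        S.Nonempty ∧ IsDivisibleSet F 2 S ∧ S.ncard = n) ↔
      (n = 9 ∨ n = 10 ∨ 12 ≤ n) := by
  constructor
  · rintro ⟨v, S, -, hS, rfl⟩
    obtain ⟨x, hx⟩ := fam_of_set S hS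
    have e1 : S.ncard = Fintype.card S := by
      rw [← Nat.card_coe_set_eq, Nat.card_eq_fintype_card]
    by_contra hcon
    by_cases h11 : S.ncard = 11
    · exact eleven_false hF hx (by omega)
    · exact small_false hF hx (by omega) (by omega)
  · intro h
    obtain ⟨v, ι, _, x, hx, hc⟩ := good_all F hF n h
    have : Nonempty ι := Fintype.card_pos_iff.mp (by omega)
    obtain ⟨S, h1, h2, h3⟩ := set_of_fam x hx
    exact ⟨v, S, h1, h2, h3.trans hc⟩

end
end
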